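/- Fix n ≥ 1, x₀ ∈ ℝⁿ and t₀ > 0. For 0 < t < t₀ write τ = t₀ - t and Ĥ(y,t) = (4πτ)^{-n/2} exp(-‖x₀-y‖²/(4τ)); for r > 0 define E_r = { (y,t) : 0 < t < t₀ and Ĥ(y,t) ≥ r^{-n} } and ψ_r(y,t) = log Ĥ(y,t) + n log r. Let Q : ℝⁿ × (0, t₀] → ℝ be smooth, and set I(r) = r^{-n} ∫_{E_r} ‖∇ψ_r‖² Q dy dt, where ∇ is the spatial gradient. Then for all 0 < r₁ ≤ r₂ with r₂² < 4π t₀ one has I(r₂) - I(r₁) = - ∫_{r₁}^{r₂} (n/r^{n+1}) ( ∫_{E_r} ψ_r ( ∂Q/∂t - ΔQ ) dy dt ) dr. -/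

import Mathlib

open Real MeasureTheory Filter Set

/-- `i`-th partial derivative of `f : ℝⁿ → ℝ`. -/
noncomputable def pdv {n : ℕ} (i : Fin n) (f : EuclideanSpace ℝ (Fin n) → ℝ)
    (y : EuclideanSpace ℝ (Fin n)) : ℝ :=
  fderiv ℝ f y (EuclideanSpace.single i 1)

/-- Euclidean Laplacian (trace of the Hessian) of `f : ℝⁿ → ℝ`. -/
noncomputable def lap {n : ℕ} (f : EuclideanSpace ℝ (Fin n) → ℝ)
    (y : EuclideanSpace ℝ (Fin n)) : ℝ :=
  ∑ i, pdv i (pdv i f) y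

/-!
Under the parabolic rescaling `(z, s) ↦ (x₀ + r z, t₀ - r² s)` every `E_r` becomes one fixed heat
ball `B`, and the claim becomes a formula for the `r`-derivative of `∫_B ‖z‖² / (4 s²) u`, where
`u` is the rescaled `Q`. Since these rescalings have the generator `z · ∇u + 2 s ∂ₛu`, this is the
identity `∫_B ‖z‖² / (4 s²) (z · ∇u + 2 s ∂ₛu) = d ∫_B φ (Δu + ∂ₛu)`, with `φ` the logarithm of the
heat kernel. It comes from the vector field `X = (d ∇u + ∂ₛu z, -z · ∇u)`: its divergence is
`d (Δu + ∂ₛu)` and the derivative of `φ` along it is `-‖z‖² / (4 s²) (z · ∇u + 2 s ∂ₛu)`, while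
`div (φ X)` has integral zero because `φ` vanishes on `∂B` away from the origin. There `φ` is
singular, and cutting `φ` off near its zero set justifies the integration by parts.
-/

open scoped RealInnerProductSpace Topology InnerProductSpace Laplacian Gradient
open Module (finrank finrank_self)

theorem exists_norm_iteratedFDeriv_le_of_contDiffOn {E F : Type*} [NormedAddCommGroup E]
    [NormedSpace ℝ E] [NormedAddCommGroup F] [NormedSpace ℝ F] {f : E → F} {S K : Set E} {m : ℕ}
    (hf : ContDiffOn ℝ m f S) (hS : UniqueDiffOn ℝ S) (hK : IsCompact K) (hKS : K ⊆ S) :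
    ∃ C, ∀ x ∈ K ∩ interior S, ‖iteratedFDeriv ℝ m f x‖ ≤ C := by
  obtain ⟨C, hC⟩ := hK.exists_bound_of_continuousOn
    ((hf.continuousOn_iteratedFDerivWithin le_rfl hS).mono hKS)
  refine ⟨C, fun x ⟨hxK, hxS⟩ ↦ ?_⟩
  rw [← iteratedFDerivWithin_eq_iteratedFDeriv hS
    (hf.contDiffAt (mem_interior_iff_mem_nhds.1 hxS)) (hKS hxK)]
  exact hC x hxK

theorem setIntegral_sub_eq_intervalIntegral {α : Type*} [MeasurableSpace α] [TopologicalSpace α]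
    [OpensMeasurableSpace α] [SecondCountableTopology α]
    {μ : Measure α} [SFinite μ] {S : Set α} (hS : MeasurableSet S) {a b : ℝ} (hab : a ≤ b)
    {f f' : ℝ → α → ℝ} {bound : α → ℝ}
    (hf : ∀ x ∈ S, ∀ r ∈ Icc a b, HasDerivAt (fun r ↦ f r x) (f' r x) r)
    (hf_int : ∀ r ∈ Icc a b, IntegrableOn (f r) S μ)
    (hf' : ContinuousOn (Function.uncurry f') (Icc a b ×ˢ S))
    (hf'_le : ∀ x ∈ S, ∀ r ∈ Icc a b, |f' r x| ≤ bound x) (hbound : IntegrableOn bound S μ) :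
    (∫ x in S, f b x ∂μ) - ∫ x in S, f a x ∂μ = ∫ r in a..b, ∫ x in S, f' r x ∂μ := by
  have h_sub : ∀ x ∈ S, f b x - f a x = ∫ r in a..b, f' r x := fun x hx ↦ by
    refine (intervalIntegral.integral_eq_sub_of_hasDerivAt
      (fun r hr ↦ hf x hx r (uIcc_of_le hab ▸ hr)) ?_).symm
    refine ContinuousOn.intervalIntegrable_of_Icc hab ?_
    exact hf'.comp (continuousOn_id.prodMk continuousOn_const) fun r hr ↦ ⟨hr, hx⟩
  have h_prod : Integrable (Function.uncurry f')
      ((volume.restrict (uIoc a b)).prod (μ.restrict S)) := by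
    rw [uIoc_of_le hab, Measure.prod_restrict]
    have h_meas : MeasurableSet (Ioc a b ×ˢ S) := measurableSet_Ioc.prod hS
    have h_dom : Integrable (fun p : ℝ × α ↦ (1 : ℝ) * bound p.2)
        ((volume.prod μ).restrict (Ioc a b ×ˢ S)) := by
      rw [← Measure.prod_restrict]
      exact (integrable_const (1 : ℝ)).mul_prod hbound
    refine h_dom.mono' ?_ ?_
    · exact (hf'.mono (prod_mono_left Ioc_subset_Icc_self)).aestronglyMeasurable h_meas
    · refine (ae_restrict_iff' h_meas).2 (ae_of_all _ fun p hp ↦ ?_)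
      rw [one_mul]
      exact hf'_le p.2 hp.2 p.1 (Ioc_subset_Icc_self hp.1)
  rw [← integral_sub (hf_int b (right_mem_Icc.2 hab)) (hf_int a (left_mem_Icc.2 hab)),
    setIntegral_congr_fun hS h_sub, intervalIntegral_integral_swap h_prod]

section Divergence

variable {V W : Type*} [NormedAddCommGroup V] [NormedSpace ℝ V] [FiniteDimensional ℝ V]
  [MeasurableSpace V] [BorelSpace V] [NormedAddCommGroup W] [NormedSpace ℝ W]
  [FiniteDimensional ℝ W] [MeasurableSpace W] [BorelSpace W]

theorem integral_fderiv_apply_eq_zero_of_hasCompactSupport {μ : Measure V} [μ.IsAddHaarMeasure]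
    {f : V → ℝ} (hf : ContDiff ℝ 1 f) (hf_supp : HasCompactSupport f) (v : V) :
    ∫ x, fderiv ℝ f x v ∂μ = 0 := by
  have hf'_int : Integrable (fun x ↦ fderiv ℝ f x v) μ :=
    ((hf.continuous_fderiv one_ne_zero).clm_apply continuous_const).integrable_of_hasCompactSupport
      (hf_supp.fderiv_apply ℝ v)
  have h_parts := integral_mul_fderiv_eq_neg_fderiv_mul_of_integrable (μ := μ)
    (f := fun _ ↦ (1 : ℝ)) (g := f) (v := v) (by simp) (by simpa only [one_mul] using hf'_int)
    (by simpa only [one_mul] using hf.continuous.integrable_of_hasCompactSupport hf_supp)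
    (fun _ _ ↦ differentiableAt_const _)
    (fun x _ ↦ (hf.differentiable one_ne_zero).differentiableAt)
  simpa using h_parts

theorem integral_fderiv_comp_apply_eq_zero_of_hasCompactSupport {E : Type*} [NormedAddCommGroup E]
    [NormedSpace ℝ E] (μ : Measure V) [μ.IsAddHaarMeasure] {F : E → ℝ} {γ : V → E} {L : V →L[ℝ] E}
    (hγ : ∀ x, HasFDerivAt γ L x) (hF : ∀ x, ContDiffAt ℝ 1 F (γ x))
    (hF_supp : HasCompactSupport (F ∘ γ)) (v : V) :
    ∫ x, fderiv ℝ F (γ x) (L v) ∂μ = 0 := by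
  have hγ_contDiff : ContDiff ℝ 1 γ :=
    contDiff_one_iff_hasFDerivAt.2 ⟨fun _ ↦ L, continuous_const, hγ⟩
  have hFγ : ContDiff ℝ 1 (F ∘ γ) := contDiff_iff_contDiffAt.2 fun x ↦
    (hF x).comp x hγ_contDiff.contDiffAt
  rw [← integral_fderiv_apply_eq_zero_of_hasCompactSupport (μ := μ) hFγ hF_supp v]
  congr 1 with x
  rw [(((hF x).differentiableAt one_ne_zero).hasFDerivAt.comp x (hγ x)).fderiv]
  rfl

-- Almost every slice parallel to a factor misses the origin.
theorem integral_fderiv_apply_eq_zero_of_contDiffAt_ne_zero [Nontrivial V] [Nontrivial W]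
    {μ : Measure V} [μ.IsAddHaarMeasure] {ν : Measure W} [ν.IsAddHaarMeasure]
    {F : V × W → ℝ} (hF : ∀ p ≠ 0, ContDiffAt ℝ 1 F p) (hF_supp : HasCompactSupport F)
    (hF_int : ∀ v, Integrable (fun p ↦ fderiv ℝ F p v) (μ.prod ν)) (v : V × W) :
    ∫ p, fderiv ℝ F p v ∂μ.prod ν = 0 := by
  have slice_fst {y : W} (hy : y ≠ 0) : ∫ x, fderiv ℝ F (x, y) (v.1, 0) ∂μ = 0 :=
    integral_fderiv_comp_apply_eq_zero_of_hasCompactSupport μ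
      (fun x ↦ hasFDerivAt_prodMk_left x y) (fun x ↦ hF (x, y) fun h ↦ hy (congrArg Prod.snd h))
      (.of_support_subset_isCompact (hF_supp.isCompact.image continuous_fst) fun x hx ↦
        ⟨(x, y), subset_tsupport F hx, rfl⟩) v.1
  have slice_snd {x : V} (hx : x ≠ 0) : ∫ y, fderiv ℝ F (x, y) (0, v.2) ∂ν = 0 :=
    integral_fderiv_comp_apply_eq_zero_of_hasCompactSupport ν
      (fun y ↦ hasFDerivAt_prodMk_right x y) (fun y ↦ hF (x, y) fun h ↦ hx (congrArg Prod.fst h))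
      (.of_support_subset_isCompact (hF_supp.isCompact.image continuous_snd) fun y hy ↦
        ⟨(x, y), subset_tsupport F hy, rfl⟩) v.2
  have h_split (p : V × W) : fderiv ℝ F p v = fderiv ℝ F p (v.1, 0) + fderiv ℝ F p (0, v.2) := by
    rw [← map_add, Prod.mk_add_mk, add_zero, zero_add]
  have h_fst : ∫ p, fderiv ℝ F p (v.1, 0) ∂μ.prod ν = 0 := by
    rw [integral_prod_symm _ (hF_int _)]
    exact integral_eq_zero_of_ae ((Measure.ae_ne ν 0).mono fun y hy ↦ slice_fst hy)
  have h_snd : ∫ p, fderiv ℝ F p (0, v.2) ∂μ.prod ν = 0 := by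
    rw [integral_prod _ (hF_int _)]
    exact integral_eq_zero_of_ae ((Measure.ae_ne μ 0).mono fun x hx ↦ slice_snd hx)
  simp_rw [h_split]
  rw [integral_add (hF_int _) (hF_int _), h_fst, h_snd, add_zero]

end Divergence

theorem integrableOn_snd_rpow_of_norm_fst_le {V : Type*} [NormedAddCommGroup V] [NormedSpace ℝ V]
    [FiniteDimensional ℝ V] [MeasurableSpace V] [BorelSpace V] {μ : Measure V}
    [μ.IsAddHaarMeasure] {m a : ℝ} (h : -1 < m + a * finrank ℝ V) (b : ℝ) {c : ℝ} (hc : 0 ≤ c) :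
    IntegrableOn (fun p : V × ℝ ↦ p.2 ^ m) {p | p.2 ∈ Ioc 0 b ∧ ‖p.1‖ ≤ c * p.2 ^ a}
      (μ.prod volume) := by
  set S : Set (V × ℝ) := {p | p.2 ∈ Ioc 0 b ∧ ‖p.1‖ ≤ c * p.2 ^ a}
  have hS : MeasurableSet S := (measurable_snd measurableSet_Ioc).inter
    (measurableSet_le measurable_fst.norm ((measurable_snd.pow_const a).const_mul c))
  have h_slice {s : ℝ} (hs : s ∈ Ioc 0 b) (z : V) : S.indicator (fun p ↦ p.2 ^ m) (z, s) =
      (Metric.closedBall (0 : V) (c * s ^ a)).indicator (fun _ ↦ s ^ m) z := by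
    refine indicator_eq_indicator ?_ rfl
    rw [mem_closedBall_zero_iff]
    exact and_iff_right hs
  have h_slice_empty {s : ℝ} (hs : s ∉ Ioc 0 b) (z : V) :
      S.indicator (fun p ↦ p.2 ^ m) (z, s) = 0 :=
    indicator_of_notMem (fun hz : (z, s) ∈ S ↦ hs hz.1) _
  rw [← integrable_indicator_iff hS, integrable_prod_iff'
    ((measurable_snd.pow_const m).indicator hS).aestronglyMeasurable]
  refine ⟨ae_of_all _ fun s ↦ ?_, ?_⟩
  · by_cases hs : s ∈ Ioc 0 b
    · simp only [h_slice hs]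
      exact (integrable_indicator_iff Metric.isClosed_closedBall.measurableSet).2
        (integrableOn_const measure_closedBall_lt_top.ne)
    · simp only [h_slice_empty hs]
      exact integrable_zero V ℝ μ
  · have h_pow : IntegrableOn (fun s : ℝ ↦
        c ^ finrank ℝ V * μ.real (Metric.closedBall 0 1) * s ^ (m + a * finrank ℝ V)) (Ioc 0 b) :=
      ((intervalIntegral.intervalIntegrable_rpow' h (a := 0) (b := b)).1).const_mul _
    refine ((integrable_indicator_iff measurableSet_Ioc).2 h_pow).congr (ae_of_all _ fun s ↦ ?_)
    by_cases hs : s ∈ Ioc 0 b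
    · have hsa : 0 ≤ c * s ^ a := mul_nonneg hc (rpow_nonneg hs.1.le a)
      simp only [h_slice hs, norm_indicator_eq_indicator_norm,
        norm_of_nonneg (rpow_nonneg hs.1.le m), indicator_of_mem hs,
        integral_indicator_const _ Metric.isClosed_closedBall.measurableSet,
        Measure.addHaar_real_closedBall' μ 0 hsa, smul_eq_mul, mul_pow, rpow_add hs.1,
        rpow_mul_natCast hs.1.le]
      ring
    · simp only [indicator_of_notMem hs, h_slice_empty hs, norm_zero, integral_zero]

theorem map_const_add_smul_addHaar {V : Type*} [NormedAddCommGroup V] [NormedSpace ℝ V]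
    [FiniteDimensional ℝ V] [MeasurableSpace V] [BorelSpace V] (μ : Measure V)
    [μ.IsAddHaarMeasure] (x₀ : V) {c : ℝ} (hc : c ≠ 0) :
    μ.map (fun x ↦ x₀ + c • x) = ENNReal.ofReal |(c ^ finrank ℝ V)⁻¹| • μ := by
  have h_comp : (fun x ↦ x₀ + c • x) = (x₀ + ·) ∘ (c • ·) := rfl
  rw [h_comp, ← Measure.map_map (measurable_const_add x₀) (measurable_const_smul c),
    Measure.map_addHaar_smul μ hc, Measure.map_smul, map_add_left_eq_self]

/-- The primitive of `x ↦ smoothTransition (k x)` vanishing at `0`: a `C¹` approximation of the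
positive part `max x 0`, whose derivative approximates the indicator of `(0, ∞)` as `k → ∞`. -/
noncomputable def smoothRamp (k : ℕ) (x : ℝ) : ℝ :=
  ∫ t in (0 : ℝ)..x, smoothTransition (k * t)

namespace smoothRamp

theorem hasDerivAt (k : ℕ) (x : ℝ) : HasDerivAt (smoothRamp k) (smoothTransition (k * x)) x := by
  have h_cont : Continuous fun t : ℝ ↦ smoothTransition (k * t) := by fun_prop
  exact (h_cont.integral_hasStrictDerivAt 0 x).hasDerivAt

theorem contDiff (k : ℕ) : ContDiff ℝ 1 (smoothRamp k) :=
  contDiff_one_iff_deriv.2 ⟨fun x ↦ (hasDerivAt k x).differentiableAt, by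
    rw [show deriv (smoothRamp k) = fun x ↦ smoothTransition (k * x) from
      funext fun x ↦ (hasDerivAt k x).deriv]
    fun_prop⟩

theorem eq_zero_of_nonpos (k : ℕ) {x : ℝ} (hx : x ≤ 0) : smoothRamp k x = 0 := by
  refine intervalIntegral.integral_zero_ae (ae_of_all _ fun t ht ↦ ?_)
  rw [uIoc_of_ge hx] at ht
  exact smoothTransition.zero_of_nonpos (mul_nonpos_of_nonneg_of_nonpos k.cast_nonneg ht.2)

theorem nonneg (k : ℕ) {x : ℝ} (hx : 0 ≤ x) : 0 ≤ smoothRamp k x :=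
  intervalIntegral.integral_nonneg hx fun _ _ ↦ smoothTransition.nonneg _

theorem le_self (k : ℕ) {x : ℝ} (hx : 0 ≤ x) : smoothRamp k x ≤ x := by
  have h_cont : Continuous fun t : ℝ ↦ smoothTransition (k * t) := by fun_prop
  calc smoothRamp k x ≤ ∫ _ in (0 : ℝ)..x, (1 : ℝ) :=
        intervalIntegral.integral_mono_on hx (h_cont.intervalIntegrable _ _)
          intervalIntegrable_const fun _ _ ↦ smoothTransition.le_one _
    _ = x := by rw [intervalIntegral.integral_const, sub_zero, smul_eq_mul, mul_one]

theorem tendsto_smoothTransition_natCast_mul {x : ℝ} (hx : 0 < x) :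
    Tendsto (fun k : ℕ ↦ smoothTransition (k * x)) atTop (nhds 1) := by
  refine tendsto_const_nhds.congr' ?_
  filter_upwards [(tendsto_natCast_atTop_atTop.atTop_mul_const hx).eventually_ge_atTop 1]
    with k hk using (smoothTransition.one_of_one_le hk).symm

theorem tendsto_self {x : ℝ} (hx : 0 ≤ x) :
    Tendsto (fun k ↦ smoothRamp k x) atTop (nhds x) := by
  have h_lim : Tendsto (fun k ↦ smoothRamp k x) atTop (nhds (∫ _ in (0 : ℝ)..x, (1 : ℝ))) := by
    refine intervalIntegral.tendsto_integral_filter_of_dominated_convergence (fun _ ↦ (1 : ℝ))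
      (Eventually.of_forall fun k ↦ ?_) (Eventually.of_forall fun k ↦ ae_of_all _ fun t _ ↦ ?_)
      intervalIntegrable_const (ae_of_all _ fun t ht ↦ ?_)
    · exact (by fun_prop : Continuous fun t : ℝ ↦ smoothTransition (k * t)).aestronglyMeasurable
    · rw [norm_of_nonneg (smoothTransition.nonneg _)]
      exact smoothTransition.le_one _
    · rw [uIoc_of_le hx] at ht
      exact tendsto_smoothTransition_natCast_mul ht.1
  simpa only [intervalIntegral.integral_const, sub_zero, smul_eq_mul, mul_one] using h_lim

end smoothRamp

section HeatBall

variable {V : Type*} [NormedAddCommGroup V] [InnerProductSpace ℝ V]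

/-- The logarithm of the fundamental solution `(4πs)^(-d/2) exp (-‖z‖² / (4s))` of the heat
equation on a `d`-dimensional space, at the point `p = (z, s)` with `s > 0`. -/
noncomputable def logHeatKernel (p : V × ℝ) : ℝ :=
  -(finrank ℝ V / 2) * log (4 * π * p.2) - ‖p.1‖ ^ 2 / (4 * p.2)

variable (V) in
/-- The heat ball of unit radius centred at the origin, with time reversed: the set where the heat
kernel is at least `1`. All other heat balls are its images under translations, parabolic
dilations and time reversal. -/
def heatBall : Set (V × ℝ) :=
  {p | 0 < p.2 ∧ 0 ≤ logHeatKernel p}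

theorem contDiffAt_logHeatKernel {n : WithTop ℕ∞} {p : V × ℝ} (hp : 0 < p.2) :
    ContDiffAt ℝ n logHeatKernel p := by
  have h_log : 4 * π * p.2 ≠ 0 := by positivity
  have h_div : 4 * p.2 ≠ 0 := by positivity
  exact (contDiffAt_const.mul ((contDiffAt_const.mul contDiffAt_snd).log h_log)).sub
    ((contDiffAt_fst.norm_sq ℝ).div (contDiffAt_const.mul contDiffAt_snd) h_div)

theorem hasFDerivAt_logHeatKernel {p : V × ℝ} (hp : 0 < p.2) :
    HasFDerivAt logHeatKernel
      ((‖p.1‖ ^ 2 / (4 * p.2 ^ 2) - finrank ℝ V / (2 * p.2)) • ContinuousLinearMap.snd ℝ V ℝ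
        - (2 * p.2)⁻¹ • (innerSL ℝ p.1).comp (ContinuousLinearMap.fst ℝ V ℝ)) p := by
  have h_log : 4 * π * p.2 ≠ 0 := by positivity
  have h_div : 4 * p.2 ≠ 0 := by positivity
  have h_deriv := ((((hasFDerivAt_snd (p := p)).const_mul (4 * π)).log h_log).const_mul
    (-(finrank ℝ V / 2 : ℝ))).sub
      ((hasFDerivAt_fst (𝕜 := ℝ) (p := p)).norm_sq.mul
        ((hasDerivAt_inv h_div).comp_hasFDerivAt p (hasFDerivAt_snd.const_mul 4)))
  refine h_deriv.congr_fderiv (ContinuousLinearMap.ext fun v ↦ ?_)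
  simp only [sub_apply, add_apply, smul_apply, ContinuousLinearMap.comp_apply,
    ContinuousLinearMap.coe_fst', ContinuousLinearMap.coe_snd', coe_innerSL_apply, smul_eq_mul,
    nsmul_eq_mul, Function.comp_apply]
  field_simp
  ring

theorem fderiv_logHeatKernel_apply {p : V × ℝ} (hp : 0 < p.2) (v : V × ℝ) :
    fderiv ℝ logHeatKernel p v =
      (‖p.1‖ ^ 2 / (4 * p.2 ^ 2) - finrank ℝ V / (2 * p.2)) * v.2 - ⟪p.1, v.1⟫ / (2 * p.2) := by
  rw [(hasFDerivAt_logHeatKernel hp).fderiv]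
  simp only [sub_apply, smul_apply, ContinuousLinearMap.comp_apply, ContinuousLinearMap.coe_fst',
    ContinuousLinearMap.coe_snd', coe_innerSL_apply, smul_eq_mul]
  ring

theorem neg_log_four_pi_mul_le {s : ℝ} (hs : 0 < s) :
    -log (4 * π * s) ≤ 4 * s ^ (-(1 / 4) : ℝ) :=
  calc -log (4 * π * s) ≤ -log s := by
        gcongr
        nlinarith [pi_gt_three]
    _ = log s⁻¹ := (log_inv s).symm
    _ ≤ s⁻¹ ^ (1 / 4 : ℝ) / (1 / 4) := log_le_rpow_div (by positivity) (by norm_num)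
    _ = 4 * s ^ (-(1 / 4) : ℝ) := by rw [inv_rpow hs.le, rpow_neg hs.le]; ring

theorem measurable_logHeatKernel [MeasurableSpace V] [BorelSpace V]
    [SecondCountableTopology V] : Measurable (logHeatKernel (V := V)) := by
  unfold logHeatKernel
  fun_prop

namespace heatBall

theorem measurableSet [MeasurableSpace V] [BorelSpace V] [SecondCountableTopology V] :
    MeasurableSet (heatBall V) :=
  (measurableSet_lt measurable_const measurable_snd).inter
    (measurableSet_le measurable_const measurable_logHeatKernel)

variable {p : V × ℝ}

theorem norm_sq_div_le (hp : p ∈ heatBall V) :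
    ‖p.1‖ ^ 2 / (4 * p.2) ≤ 2 * finrank ℝ V * p.2 ^ (-(1 / 4) : ℝ) := by
  obtain ⟨hs, h_nonneg⟩ := hp
  rw [logHeatKernel] at h_nonneg
  have h_log := mul_le_mul_of_nonneg_left (neg_log_four_pi_mul_le hs)
    (by positivity : (0 : ℝ) ≤ finrank ℝ V / 2)
  linarith

theorem norm_sq_div_sq_le (hp : p ∈ heatBall V) :
    ‖p.1‖ ^ 2 / (4 * p.2 ^ 2) ≤ 2 * finrank ℝ V * p.2 ^ (-(5 / 4) : ℝ) := by
  have hs := hp.1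
  have h_rpow : p.2 ^ (-(5 / 4) : ℝ) = p.2 ^ (-(1 / 4) : ℝ) / p.2 := by
    rw [← rpow_sub_one hs.ne']
    norm_num
  rw [h_rpow, pow_two p.2, ← mul_assoc, ← div_div, ← mul_div_assoc]
  gcongr
  exact norm_sq_div_le hp

theorem norm_sq_le (hp : p ∈ heatBall V) :
    ‖p.1‖ ^ 2 ≤ 8 * finrank ℝ V * p.2 ^ (3 / 4 : ℝ) := by
  have h_div := norm_sq_div_le hp
  have hs := hp.1
  rw [div_le_iff₀ (by positivity)] at h_div
  have h_rpow : p.2 ^ (3 / 4 : ℝ) = p.2 ^ (-(1 / 4) : ℝ) * p.2 := by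
    rw [← rpow_add_one hs.ne']
    norm_num
  rw [h_rpow]
  linarith

theorem logHeatKernel_le (hp : p ∈ heatBall V) :
    logHeatKernel p ≤ 2 * finrank ℝ V * p.2 ^ (-(1 / 4) : ℝ) := by
  have hs := hp.1
  have h_log := mul_le_mul_of_nonneg_left (neg_log_four_pi_mul_le hs)
    (by positivity : (0 : ℝ) ≤ finrank ℝ V / 2)
  have h_sq : 0 ≤ ‖p.1‖ ^ 2 / (4 * p.2) := by positivity
  rw [logHeatKernel]
  linarith

theorem closure_subset : closure (heatBall V) ⊆ insert 0 (heatBall V) := by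
  have h_closed : IsClosed
      {p : V × ℝ | 0 ≤ p.2 ∧ ‖p.1‖ ^ 2 ≤ 8 * finrank ℝ V * p.2 ^ (3 / 4 : ℝ)} :=
    (isClosed_le continuous_const continuous_snd).inter (isClosed_le (by fun_prop)
      (continuous_const.mul (continuous_snd.rpow_const fun _ ↦ .inr (by norm_num))))
  intro p hp
  obtain ⟨hs, h_norm⟩ := closure_minimal (s := heatBall V)
    (fun q hq ↦ And.intro hq.1.le (norm_sq_le hq)) h_closed hp
  rcases hs.eq_or_lt with hs | hs
  · rw [← hs, zero_rpow (by norm_num), mul_zero] at h_norm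
    have hz : p.1 = 0 := norm_eq_zero.1 (pow_eq_zero_iff two_ne_zero |>.1
      (h_norm.antisymm (sq_nonneg _)))
    exact .inl (Prod.ext hz hs.symm)
  · refine .inr ⟨hs, le_of_not_gt fun h_neg ↦ mem_closure_iff_frequently.1 hp ?_⟩
    have h_cont : ContinuousAt logHeatKernel p :=
      (contDiffAt_logHeatKernel (n := 0) hs).continuousAt
    filter_upwards [h_cont.eventually_lt_const h_neg] with q hq h_mem using hq.not_ge h_mem.2

section Nontrivial

variable [FiniteDimensional ℝ V] [Nontrivial V]

theorem four_pi_mul_snd_le_one (hp : p ∈ heatBall V) : 4 * π * p.2 ≤ 1 := by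
  obtain ⟨hs, h_nonneg⟩ := hp
  by_contra! h
  have h_log : 0 < finrank ℝ V / 2 * log (4 * π * p.2) :=
    mul_pos (div_pos (mod_cast Module.finrank_pos) two_pos) (log_pos h)
  have h_sq : 0 ≤ ‖p.1‖ ^ 2 / (4 * p.2) := by positivity
  rw [logHeatKernel] at h_nonneg
  linarith

theorem snd_le_one (hp : p ∈ heatBall V) : p.2 ≤ 1 := by
  nlinarith [four_pi_mul_snd_le_one hp, pi_gt_three, hp.1]

theorem rpow_le {m : ℝ} (hm : -(5 / 4) ≤ m) (hp : p ∈ heatBall V) :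
    p.2 ^ m ≤ p.2 ^ (-(5 / 4) : ℝ) :=
  rpow_le_rpow_of_exponent_ge hp.1 (snd_le_one hp) hm

theorem norm_fst_le (hp : p ∈ heatBall V) : ‖p.1‖ ≤ 9 / 2 * finrank ℝ V := by
  have h_dim : (1 : ℝ) ≤ finrank ℝ V := mod_cast Module.finrank_pos
  have h_sq : ‖p.1‖ ^ 2 ≤ 8 * finrank ℝ V * 1 := (norm_sq_le hp).trans (by
    gcongr
    exact rpow_le_one hp.1.le (snd_le_one hp) (by norm_num))
  nlinarith [two_mul_le_add_sq ‖p.1‖ 1]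

theorem isBounded : Bornology.IsBounded (heatBall V) := by
  refine ((Metric.isBounded_closedBall (x := (0 : V)) (r := 9 / 2 * finrank ℝ V)).prod
    (Metric.isBounded_Icc (0 : ℝ) 1)).subset fun p hp ↦ ⟨?_, hp.1.le, snd_le_one hp⟩
  rw [mem_closedBall_zero_iff]
  exact norm_fst_le hp

theorem norm_fderiv_logHeatKernel_le (hp : p ∈ heatBall V) :
    ‖fderiv ℝ logHeatKernel p‖ ≤ 5 * finrank ℝ V * p.2 ^ (-(5 / 4) : ℝ) := by
  have hs := hp.1
  have h_inv : p.2⁻¹ ≤ p.2 ^ (-(5 / 4) : ℝ) := by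
    rw [← rpow_neg_one]
    exact rpow_le (by norm_num) hp
  have h_sq := norm_sq_div_sq_le hp
  have h_norm := norm_fst_le hp
  have h_coeff : |‖p.1‖ ^ 2 / (4 * p.2 ^ 2) - finrank ℝ V / (2 * p.2)|
      ≤ ‖p.1‖ ^ 2 / (4 * p.2 ^ 2) + finrank ℝ V / 2 * p.2⁻¹ := by
    refine (abs_sub _ _).trans_eq ?_
    rw [abs_of_nonneg (by positivity), abs_of_nonneg (by positivity), ← div_div _ 2,
      div_eq_mul_inv _ p.2]
  refine ContinuousLinearMap.opNorm_le_bound _ (by positivity) fun v ↦ ?_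
  rw [fderiv_logHeatKernel_apply hs, norm_eq_abs]
  calc _ ≤ |‖p.1‖ ^ 2 / (4 * p.2 ^ 2) - finrank ℝ V / (2 * p.2)| * ‖v‖
        + ‖p.1‖ * ‖v‖ / (2 * p.2) := by
        refine (abs_sub _ _).trans ?_
        rw [abs_mul, abs_div, abs_of_pos (by positivity : 0 < 2 * p.2)]
        gcongr
        · exact norm_snd_le v
        · exact (abs_real_inner_le_norm _ _).trans (by gcongr; exact _root_.norm_fst_le v)
    _ ≤ (2 * finrank ℝ V * p.2 ^ (-(5 / 4) : ℝ) + finrank ℝ V / 2 * p.2 ^ (-(5 / 4) : ℝ)) * ‖v‖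
        + 9 / 2 * finrank ℝ V * ‖v‖ / 2 * p.2 ^ (-(5 / 4) : ℝ) := by
        rw [← div_div (‖p.1‖ * ‖v‖), div_eq_mul_inv _ p.2]
        gcongr
        exact h_coeff.trans (by gcongr)
    _ ≤ 5 * finrank ℝ V * p.2 ^ (-(5 / 4) : ℝ) * ‖v‖ := by
        have : 0 ≤ finrank ℝ V * p.2 ^ (-(5 / 4) : ℝ) * ‖v‖ := by positivity
        linarith

end Nontrivial

section Integration

variable [FiniteDimensional ℝ V] [Nontrivial V] [MeasurableSpace V] [BorelSpace V]

theorem integrableOn_rpow :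
    IntegrableOn (fun p : V × ℝ ↦ p.2 ^ (-(5 / 4) : ℝ)) (heatBall V) := by
  have h_dim : (1 : ℝ) ≤ finrank ℝ V := mod_cast Module.finrank_pos
  refine (integrableOn_snd_rpow_of_norm_fst_le (a := 3 / 8) (by linarith) 1
    (sqrt_nonneg (8 * finrank ℝ V))).mono_set fun p hp ↦ ⟨⟨hp.1, snd_le_one hp⟩, ?_⟩
  have hs := hp.1
  refine le_of_sq_le_sq ?_ (by positivity)
  rw [mul_pow, sq_sqrt (by positivity), ← rpow_mul_natCast hs.le,
    show (3 / 8 : ℝ) * (2 : ℕ) = 3 / 4 by norm_num]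
  exact norm_sq_le hp

theorem integrableOn_of_continuousOn {h : V × ℝ → ℝ} (h_cont : ContinuousOn h (heatBall V)) {C : ℝ}
    (h_le : ∀ p ∈ heatBall V, |h p| ≤ C * p.2 ^ (-(5 / 4) : ℝ)) : IntegrableOn h (heatBall V) :=
  (integrableOn_rpow.const_mul C).mono' (h_cont.aestronglyMeasurable measurableSet)
    ((ae_restrict_iff' measurableSet).2 (ae_of_all _ h_le))

theorem ae_logHeatKernel_pos : ∀ᵐ p : V × ℝ, p ∈ heatBall V → 0 < logHeatKernel p := by
  set N : Set (V × ℝ) := {p | 0 < p.2 ∧ logHeatKernel p = 0}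
  have hN : MeasurableSet N := (measurableSet_lt measurable_const measurable_snd).inter
    (measurableSet_eq_fun measurable_logHeatKernel measurable_const)
  have hN_null : volume N = 0 := by
    rw [Measure.volume_eq_prod, Measure.prod_apply_symm hN,
      lintegral_eq_zero_iff' (measurable_measure_prodMk_right hN).aemeasurable]
    refine ae_of_all _ fun s ↦ measure_mono_null (fun z hz ↦ ?_)
      (Measure.addHaar_sphere volume (0 : V) √(4 * s * (-(finrank ℝ V / 2) * log (4 * π * s))))
    obtain ⟨hs, hz⟩ : 0 < s ∧ logHeatKernel (z, s) = 0 := hz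
    have h_sq : 4 * s * (-(finrank ℝ V / 2) * log (4 * π * s)) = ‖z‖ ^ 2 := by
      rw [sub_eq_zero.1 hz]
      field_simp
    rw [mem_sphere_zero_iff_norm, h_sq, sqrt_sq (norm_nonneg z)]
  filter_upwards [measure_eq_zero_iff_ae_notMem.1 hN_null] with p hpN hp
  exact hp.2.lt_of_ne fun h ↦ hpN ⟨hp.1, h.symm⟩

end Integration

end heatBall

end HeatBall

section IntegrationByParts

variable {V : Type*} [NormedAddCommGroup V] [InnerProductSpace ℝ V]

/-- The product of `g` with a `C¹` approximation of the positive part of `logHeatKernel`, extended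
by zero outside the heat ball. -/
noncomputable def heatBallCutoff (k : ℕ) (g : V × ℝ → ℝ) : V × ℝ → ℝ :=
  (heatBall V).indicator fun p ↦ smoothRamp k (logHeatKernel p) * g p

/-- The derivative of `heatBallCutoff k g` in direction `v`, at points of the heat ball. -/
noncomputable def heatBallCutoffDeriv (k : ℕ) (g : V × ℝ → ℝ) (v p : V × ℝ) : ℝ :=
  smoothTransition (k * logHeatKernel p) * (fderiv ℝ logHeatKernel p v * g p)
    + smoothRamp k (logHeatKernel p) * fderiv ℝ g p v

namespace heatBallCutoff

variable {k : ℕ} {g : V × ℝ → ℝ} {p : V × ℝ}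

theorem eventuallyEq_of_mem (hp : p ∈ heatBall V) :
    heatBallCutoff k g =ᶠ[𝓝 p] fun q ↦ smoothRamp k (logHeatKernel q) * g q := by
  filter_upwards [continuousAt_snd.eventually_const_lt hp.1] with q hq
  by_cases hqB : q ∈ heatBall V
  · exact indicator_of_mem hqB _
  · have h_neg : logHeatKernel q ≤ 0 := le_of_not_ge fun h ↦ hqB ⟨hq, h⟩
    rw [heatBallCutoff, indicator_of_notMem hqB, smoothRamp.eq_zero_of_nonpos k h_neg, zero_mul]

theorem eventuallyEq_zero_of_notMem (hp0 : p ≠ 0) (hp : p ∉ heatBall V) :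
    heatBallCutoff k g =ᶠ[𝓝 p] 0 := by
  have h_closure : p ∉ closure (heatBall V) := fun h ↦
    (heatBall.closure_subset h).elim hp0 hp
  filter_upwards [isClosed_closure.isOpen_compl.mem_nhds h_closure] with q hq
  exact indicator_of_notMem (fun hqB ↦ hq (subset_closure hqB)) _

theorem contDiffAt (hg : ∀ p ∈ heatBall V, ContDiffAt ℝ 1 g p) (hp0 : p ≠ 0) :
    ContDiffAt ℝ 1 (heatBallCutoff k g) p := by
  by_cases hp : p ∈ heatBall V
  · refine ContDiffAt.congr_of_eventuallyEq ?_ (eventuallyEq_of_mem hp)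
    exact ((smoothRamp.contDiff k).contDiffAt.comp p (contDiffAt_logHeatKernel hp.1)).mul (hg p hp)
  · exact contDiffAt_const.congr_of_eventuallyEq (eventuallyEq_zero_of_notMem hp0 hp)

theorem fderiv_apply (hg : ∀ p ∈ heatBall V, ContDiffAt ℝ 1 g p) (hp0 : p ≠ 0) (v : V × ℝ) :
    fderiv ℝ (heatBallCutoff k g) p v =
      (heatBall V).indicator (heatBallCutoffDeriv k g v) p := by
  by_cases hp : p ∈ heatBall V
  · have h_deriv := ((smoothRamp.hasDerivAt k _).comp_hasFDerivAt p
      ((contDiffAt_logHeatKernel (n := 1) hp.1).differentiableAt one_ne_zero).hasFDerivAt).mul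
      ((hg p hp).differentiableAt one_ne_zero).hasFDerivAt
    rw [indicator_of_mem hp, (h_deriv.congr_of_eventuallyEq (eventuallyEq_of_mem hp)).fderiv]
    simp only [heatBallCutoffDeriv, Function.comp_apply, add_apply, smul_apply, smul_eq_mul]
    ring
  · rw [indicator_of_notMem hp, (eventuallyEq_zero_of_notMem hp0 hp).fderiv_eq, fderiv_zero]
    rfl

variable [FiniteDimensional ℝ V] [Nontrivial V]

theorem hasCompactSupport : HasCompactSupport (heatBallCutoff k g) :=
  .of_support_subset_isCompact heatBall.isBounded.isCompact_closure
    (support_indicator_subset.trans subset_closure)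

end heatBallCutoff

namespace heatBall

theorem continuousOn_logHeatKernel : ContinuousOn logHeatKernel (heatBall V) := fun _ hp ↦
  (contDiffAt_logHeatKernel (n := 0) hp.1).continuousAt.continuousWithinAt

theorem continuousOn_fderiv_apply {g : V × ℝ → ℝ} (hg : ∀ p ∈ heatBall V, ContDiffAt ℝ 1 g p)
    (v : V × ℝ) : ContinuousOn (fun p ↦ fderiv ℝ g p v) (heatBall V) := fun p hp ↦
  (((hg p hp).fderiv_right (m := 0) le_rfl).continuousAt.clm_apply
    continuousAt_const).continuousWithinAt

theorem fderiv_logHeatKernel_mul_apply {g : V × ℝ → ℝ} {p : V × ℝ} (hp : p ∈ heatBall V)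
    (hg : ContDiffAt ℝ 1 g p) (v : V × ℝ) :
    fderiv ℝ (fun p ↦ logHeatKernel p * g p) p v =
      fderiv ℝ logHeatKernel p v * g p + logHeatKernel p * fderiv ℝ g p v := by
  rw [fderiv_fun_mul ((contDiffAt_logHeatKernel hp.1).differentiableAt one_ne_zero)
    (hg.differentiableAt one_ne_zero)]
  simp only [add_apply, smul_apply, smul_eq_mul]
  ring

variable [FiniteDimensional ℝ V] [Nontrivial V]

theorem abs_fderiv_mul_add_mul_fderiv_le {g : V × ℝ → ℝ} {p : V × ℝ} (hp : p ∈ heatBall V)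
    {C C' : ℝ} (hgC : |g p| ≤ C) (hgC' : ‖fderiv ℝ g p‖ ≤ C') (v : V × ℝ) {a b : ℝ}
    (ha : a ∈ Icc 0 1) (hb : b ∈ Icc 0 (logHeatKernel p)) :
    |a * (fderiv ℝ logHeatKernel p v * g p) + b * fderiv ℝ g p v|
      ≤ (5 * finrank ℝ V * ‖v‖ * C + 2 * finrank ℝ V * (C' * ‖v‖)) * p.2 ^ (-(5 / 4) : ℝ) := by
  have hs := hp.1
  have h_fderiv : |fderiv ℝ logHeatKernel p v|
      ≤ 5 * finrank ℝ V * p.2 ^ (-(5 / 4) : ℝ) * ‖v‖ :=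
    (fderiv ℝ logHeatKernel p).le_of_opNorm_le (norm_fderiv_logHeatKernel_le hp) v
  have h_b : b ≤ 2 * finrank ℝ V * p.2 ^ (-(5 / 4) : ℝ) :=
    hb.2.trans <| (logHeatKernel_le hp).trans <| by
      gcongr 2 * finrank ℝ V * ?_
      exact rpow_le (by norm_num) hp
  calc _ ≤ 1 * (5 * finrank ℝ V * p.2 ^ (-(5 / 4) : ℝ) * ‖v‖ * C)
        + 2 * finrank ℝ V * p.2 ^ (-(5 / 4) : ℝ) * (C' * ‖v‖) := by
        refine (abs_add_le _ _).trans ?_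
        rw [abs_mul, abs_mul, abs_mul, abs_of_nonneg ha.1, abs_of_nonneg hb.1]
        gcongr
        · exact ha.2
        · exact (fderiv ℝ g p).le_of_opNorm_le hgC' v
    _ = _ := by ring

theorem abs_cutoffDeriv_le {g : V × ℝ → ℝ} {p : V × ℝ} (hp : p ∈ heatBall V) {C C' : ℝ}
    (hgC : |g p| ≤ C) (hgC' : ‖fderiv ℝ g p‖ ≤ C') (k : ℕ) (v : V × ℝ) :
    |heatBallCutoffDeriv k g v p|
      ≤ (5 * finrank ℝ V * ‖v‖ * C + 2 * finrank ℝ V * (C' * ‖v‖)) * p.2 ^ (-(5 / 4) : ℝ) :=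
  abs_fderiv_mul_add_mul_fderiv_le hp hgC hgC' v
    ⟨smoothTransition.nonneg _, smoothTransition.le_one _⟩
    ⟨smoothRamp.nonneg k hp.2, smoothRamp.le_self k hp.2⟩

variable [MeasurableSpace V] [BorelSpace V]

theorem integrableOn_cutoffDeriv {g : V × ℝ → ℝ}
    (hg : ∀ p ∈ heatBall V, ContDiffAt ℝ 1 g p) {C C' : ℝ}
    (hgC : ∀ p ∈ heatBall V, |g p| ≤ C) (hgC' : ∀ p ∈ heatBall V, ‖fderiv ℝ g p‖ ≤ C')
    (k : ℕ) (v : V × ℝ) :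
    IntegrableOn (heatBallCutoffDeriv k g v) (heatBall V) := by
  have hg_cont : ContinuousOn g (heatBall V) := fun p hp ↦
    (hg p hp).continuousAt.continuousWithinAt
  have hφ' := continuousOn_fderiv_apply (fun p hp ↦ contDiffAt_logHeatKernel (V := V) hp.1) v
  refine integrableOn_of_continuousOn (.add (.mul ?_ (hφ'.mul hg_cont))
    (.mul ?_ (continuousOn_fderiv_apply hg v)))
    fun p hp ↦ abs_cutoffDeriv_le hp (hgC p hp) (hgC' p hp) k v
  · exact smoothTransition.continuous.comp_continuousOn
      (continuousOn_const.mul continuousOn_logHeatKernel)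
  · exact (smoothRamp.contDiff k).continuous.comp_continuousOn continuousOn_logHeatKernel

theorem integral_cutoffDeriv_eq_zero {g : V × ℝ → ℝ}
    (hg : ∀ p ∈ heatBall V, ContDiffAt ℝ 1 g p) {C C' : ℝ}
    (hgC : ∀ p ∈ heatBall V, |g p| ≤ C) (hgC' : ∀ p ∈ heatBall V, ‖fderiv ℝ g p‖ ≤ C')
    (k : ℕ) (v : V × ℝ) :
    ∫ p in heatBall V, heatBallCutoffDeriv k g v p = 0 := by
  have h_ae (v : V × ℝ) : (fun p ↦ fderiv ℝ (heatBallCutoff k g) p v) =ᵐ[volume]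
      (heatBall V).indicator (heatBallCutoffDeriv k g v) :=
    (Measure.ae_ne ((volume : Measure V).prod (volume : Measure ℝ)) 0).mono fun p hp0 ↦
      heatBallCutoff.fderiv_apply hg hp0 v
  rw [← integral_indicator measurableSet, ← integral_congr_ae (h_ae v)]
  refine integral_fderiv_apply_eq_zero_of_contDiffAt_ne_zero
    (fun p hp0 ↦ heatBallCutoff.contDiffAt hg hp0) heatBallCutoff.hasCompactSupport (fun v ↦ ?_) v
  exact ((integrable_indicator_iff measurableSet).2
    (integrableOn_cutoffDeriv hg hgC hgC' k v)).congr (h_ae v).symm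

theorem integrableOn_fderiv_logHeatKernel_mul {g : V × ℝ → ℝ}
    (hg : ∀ p ∈ heatBall V, ContDiffAt ℝ 1 g p) {C C' : ℝ}
    (hgC : ∀ p ∈ heatBall V, |g p| ≤ C) (hgC' : ∀ p ∈ heatBall V, ‖fderiv ℝ g p‖ ≤ C')
    (v : V × ℝ) :
    IntegrableOn (fun p ↦ fderiv ℝ (fun p ↦ logHeatKernel p * g p) p v) (heatBall V) := by
  refine integrableOn_of_continuousOn
    (C := 5 * finrank ℝ V * ‖v‖ * C + 2 * finrank ℝ V * (C' * ‖v‖))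
    (continuousOn_fderiv_apply (fun p hp ↦ (contDiffAt_logHeatKernel hp.1).mul (hg p hp)) v)
    fun p hp ↦ ?_
  rw [fderiv_logHeatKernel_mul_apply hp (hg p hp), ← one_mul (fderiv ℝ logHeatKernel p v * g p)]
  exact abs_fderiv_mul_add_mul_fderiv_le hp (hgC p hp) (hgC' p hp) v
    (right_mem_Icc.2 zero_le_one) (right_mem_Icc.2 hp.2)

theorem integral_fderiv_logHeatKernel_mul_eq_zero {g : V × ℝ → ℝ}
    (hg : ∀ p ∈ heatBall V, ContDiffAt ℝ 1 g p) {C C' : ℝ}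
    (hgC : ∀ p ∈ heatBall V, |g p| ≤ C) (hgC' : ∀ p ∈ heatBall V, ‖fderiv ℝ g p‖ ≤ C')
    (v : V × ℝ) :
    ∫ p in heatBall V, fderiv ℝ (fun p ↦ logHeatKernel p * g p) p v = 0 := by
  refine tendsto_nhds_unique (tendsto_integral_of_dominated_convergence
    (fun p ↦ (5 * finrank ℝ V * ‖v‖ * C + 2 * finrank ℝ V * (C' * ‖v‖)) * p.2 ^ (-(5 / 4) : ℝ))
    (fun k ↦ (integrableOn_cutoffDeriv hg hgC hgC' k v).aestronglyMeasurable)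
    (integrableOn_rpow.const_mul _)
    (fun k ↦ (ae_restrict_iff' measurableSet).2 (ae_of_all _ fun p hp ↦
      abs_cutoffDeriv_le hp (hgC p hp) (hgC' p hp) k v))
    ((ae_restrict_iff' measurableSet).2 (ae_logHeatKernel_pos.mono fun p hφ hp ↦ ?_))) ?_
  · rw [fderiv_logHeatKernel_mul_apply hp (hg p hp)]
    simpa only [heatBallCutoffDeriv, one_mul] using
      ((smoothRamp.tendsto_smoothTransition_natCast_mul (hφ hp)).mul_const _).add
      ((smoothRamp.tendsto_self (hφ hp).le).mul_const _)
  · simp only [integral_cutoffDeriv_eq_zero hg hgC hgC', tendsto_const_nhds]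

end heatBall

end IntegrationByParts

section SecondDerivative

theorem hasFDerivAt_fderiv_apply {E : Type*} [NormedAddCommGroup E] [NormedSpace ℝ E] {f : E → ℝ}
    {x : E} (hf : ContDiffAt ℝ 2 f x) {X : E → E} {L : E →L[ℝ] E} (hX : HasFDerivAt X L x) :
    HasFDerivAt (fun y ↦ fderiv ℝ f y (X y))
      ((fderiv ℝ f x).comp L + (fderiv ℝ (fderiv ℝ f) x).flip (X x)) x :=
  ((hf.fderiv_right (m := 1) (by norm_num)).differentiableAt one_ne_zero).hasFDerivAt.clm_apply hX

theorem norm_fderiv_fderiv_apply_le {E : Type*} [NormedAddCommGroup E] [NormedSpace ℝ E]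
    {f : E → ℝ} {x : E} (hf : ContDiffAt ℝ 2 f x) {X : E → E} {L : E →L[ℝ] E}
    (hX : HasFDerivAt X L x) :
    ‖fderiv ℝ (fun y ↦ fderiv ℝ f y (X y)) x‖
      ≤ ‖fderiv ℝ f x‖ * ‖L‖ + ‖iteratedFDeriv ℝ 2 f x‖ * ‖X x‖ := by
  rw [(hasFDerivAt_fderiv_apply hf hX).fderiv, ← norm_iteratedFDeriv_fderiv,
    norm_iteratedFDeriv_one, ← ContinuousLinearMap.opNorm_flip]
  exact (norm_add_le _ _).trans (add_le_add (ContinuousLinearMap.opNorm_comp_le _ _)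
    (ContinuousLinearMap.le_opNorm _ _))

theorem fderiv_fderiv_apply_const {E : Type*} [NormedAddCommGroup E] [NormedSpace ℝ E] {f : E → ℝ}
    {x : E} (hf : ContDiffAt ℝ 2 f x) (v w : E) :
    fderiv ℝ (fun y ↦ fderiv ℝ f y v) x w = fderiv ℝ (fderiv ℝ f) x w v := by
  simp [(hasFDerivAt_fderiv_apply hf (hasFDerivAt_const v x)).fderiv]

variable {V : Type*} [NormedAddCommGroup V] [InnerProductSpace ℝ V]

theorem laplacian_eq_sum_fderiv [FiniteDimensional ℝ V] {ι : Type*} [Fintype ι]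
    (b : OrthonormalBasis ι ℝ V) {f : V → ℝ} {x : V} (hf : ContDiffAt ℝ 2 f x) :
    Δ f x = ∑ i, fderiv ℝ (fun y ↦ fderiv ℝ f y (b i)) x (b i) := by
  rw [congrFun (InnerProductSpace.laplacian_eq_iteratedFDeriv_orthonormalBasis _ b) x]
  refine Finset.sum_congr rfl fun i _ ↦ ?_
  rw [fderiv_fderiv_apply_const hf, iteratedFDeriv_two_apply]
  rfl

theorem fderiv_prodMk_left {u : V × ℝ → ℝ} {z : V} {s : ℝ} (hu : DifferentiableAt ℝ u (z, s))
    (v : V) : fderiv ℝ (fun z ↦ u (z, s)) z v = fderiv ℝ u (z, s) (v, 0) := by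
  have h_slice : HasFDerivAt (fun z ↦ u (z, s)) _ z :=
    hu.hasFDerivAt.comp z (hasFDerivAt_prodMk_left z s)
  rw [h_slice.fderiv]
  rfl

theorem deriv_prodMk_right {u : V × ℝ → ℝ} {p : V × ℝ} (hu : DifferentiableAt ℝ u p) :
    deriv (fun s ↦ u (p.1, s)) p.2 = fderiv ℝ u p (0, 1) :=
  (hu.hasFDerivAt.comp_hasDerivAt p.2 (hasFDerivAt_prodMk_right p.1 p.2).hasDerivAt).deriv

variable [FiniteDimensional ℝ V]

theorem laplacian_prodMk_left {ι : Type*} [Fintype ι] (b : OrthonormalBasis ι ℝ V)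
    {u : V × ℝ → ℝ} {p : V × ℝ} (hu : ContDiffAt ℝ 2 u p) :
    Δ (fun z ↦ u (z, p.2)) p.1 = ∑ i, fderiv ℝ (fderiv ℝ u) p (b i, 0) (b i, 0) := by
  have h_near : ∀ᶠ z in 𝓝 p.1, ContDiffAt ℝ 2 u (z, p.2) :=
    (Continuous.prodMk_left p.2).continuousAt.eventually (hu.eventually (by simp))
  have h_slice (i : ι) : (fun z ↦ fderiv ℝ (fun z ↦ u (z, p.2)) z (b i)) =ᶠ[𝓝 p.1]
      fun z ↦ fderiv ℝ u (z, p.2) (b i, 0) := by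
    filter_upwards [h_near] with z hz using fderiv_prodMk_left (hz.differentiableAt two_ne_zero) _
  have h_diff (i : ι) : DifferentiableAt ℝ (fun p ↦ fderiv ℝ u p (b i, 0)) p :=
    (hasFDerivAt_fderiv_apply hu (hasFDerivAt_const _ _)).differentiableAt
  have h_contDiff : ContDiffAt ℝ 2 (fun z ↦ u (z, p.2)) p.1 :=
    hu.comp p.1 (contDiff_prodMk_left p.2).contDiffAt
  rw [laplacian_eq_sum_fderiv b h_contDiff]
  refine Finset.sum_congr rfl fun i _ ↦ ?_
  rw [(h_slice i).fderiv_eq, fderiv_prodMk_left (h_diff i), fderiv_fderiv_apply_const hu]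

/-- The operator `Δ + ∂ₛ` on functions of `p = (z, s)`, which is the heat operator `∂ₜ - Δ` up to
sign after the time reversal `t = t₀ - s`. -/
noncomputable def backwardHeatOperator (u : V × ℝ → ℝ) (p : V × ℝ) : ℝ :=
  Δ (fun z ↦ u (z, p.2)) p.1 + deriv (fun s ↦ u (p.1, s)) p.2

theorem backwardHeatOperator_eq_sum {ι : Type*} [Fintype ι] (b : OrthonormalBasis ι ℝ V)
    {u : V × ℝ → ℝ} {p : V × ℝ} (hu : ContDiffAt ℝ 2 u p) :
    backwardHeatOperator u p =
      ∑ i, fderiv ℝ (fderiv ℝ u) p (b i, 0) (b i, 0) + fderiv ℝ u p (0, 1) := by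
  rw [backwardHeatOperator, laplacian_prodMk_left b hu,
    deriv_prodMk_right (hu.differentiableAt two_ne_zero)]

end SecondDerivative

section FluxIdentity

variable {V : Type*} [NormedAddCommGroup V] [InnerProductSpace ℝ V]
  {u : V × ℝ → ℝ} {X : V × ℝ → V × ℝ}

theorem apply_smul_prodMk (T : V × ℝ →L[ℝ] ℝ) (c : ℝ) (z : V) (s : ℝ) :
    T (c • z, s) = c * T (z, 0) + s * T (0, 1) := by
  rw [← smul_eq_mul, ← smul_eq_mul, ← map_smul, ← map_smul, ← map_add]
  simp

theorem sum_inner_mul_apply_prodMk_zero {ι : Type*} [Fintype ι] (b : OrthonormalBasis ι ℝ V)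
    (T : V × ℝ →L[ℝ] ℝ) (z : V) : ∑ i, ⟪b i, z⟫ * T (b i, 0) = T (z, 0) := by
  have h_repr := congrArg (T.comp (ContinuousLinearMap.inl ℝ V ℝ)) (b.sum_repr' z)
  simpa only [map_sum, map_smul, smul_eq_mul, ContinuousLinearMap.comp_apply,
    ContinuousLinearMap.inl_apply] using h_repr

namespace heatBall

theorem fderiv_logHeatKernel_mul_fderiv_apply {p : V × ℝ} (hp : p ∈ heatBall V)
    (hu : ContDiffAt ℝ 2 u p) (hX : ContDiffAt ℝ 1 X p) (v : V × ℝ) :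
    fderiv ℝ (fun p ↦ logHeatKernel p * fderiv ℝ u p (X p)) p v =
      ((‖p.1‖ ^ 2 / (4 * p.2 ^ 2) - finrank ℝ V / (2 * p.2)) * v.2 - ⟪p.1, v.1⟫ / (2 * p.2))
        * fderiv ℝ u p (X p)
      + logHeatKernel p * (fderiv ℝ u p (fderiv ℝ X p v) + fderiv ℝ (fderiv ℝ u) p v (X p)) := by
  rw [fderiv_logHeatKernel_mul_apply hp ((hu.fderiv_right (by norm_num)).clm_apply hX),
    fderiv_logHeatKernel_apply hp.1,
    (hasFDerivAt_fderiv_apply hu (hX.differentiableAt one_ne_zero).hasFDerivAt).fderiv]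
  rfl

theorem sum_fderiv_logHeatKernel_mul_fderiv_space [FiniteDimensional ℝ V] {p : V × ℝ}
    (hp : p ∈ heatBall V) (hu : ContDiffAt ℝ 2 u p) {ι : Type*} [Fintype ι]
    (b : OrthonormalBasis ι ℝ V) :
    ∑ i, fderiv ℝ (fun p ↦ logHeatKernel p
        * fderiv ℝ u p ((finrank ℝ V : ℝ) • b i, ⟪b i, p.1⟫)) p (b i, 0) =
      logHeatKernel p
          * (finrank ℝ V * backwardHeatOperator u p + fderiv ℝ (fderiv ℝ u) p (0, 1) (p.1, 0))
        - finrank ℝ V / (2 * p.2) * fderiv ℝ u p (p.1, 0)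
        - ‖p.1‖ ^ 2 / (2 * p.2) * fderiv ℝ u p (0, 1) := by
  have h_symm (v w : V × ℝ) : fderiv ℝ (fderiv ℝ u) p v w = fderiv ℝ (fderiv ℝ u) p w v :=
    hu.isSymmSndFDerivAt (by simp only [minSmoothness_of_isRCLikeNormedField, le_refl]) v w
  have h_card : (Fintype.card ι : ℝ) = finrank ℝ V := by
    rw [Module.finrank_eq_card_basis b.toBasis]
  have h_deriv (i : ι) :
      HasFDerivAt (fun p : V × ℝ ↦ ((finrank ℝ V : ℝ) • b i, ⟪b i, p.1⟫)) _ p :=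
    (hasFDerivAt_const _ _).prodMk (((innerSL ℝ (b i)).comp (.fst ℝ V ℝ)).hasFDerivAt)
  have h_term (i : ι) : fderiv ℝ (fun p ↦ logHeatKernel p
        * fderiv ℝ u p ((finrank ℝ V : ℝ) • b i, ⟪b i, p.1⟫)) p (b i, 0) =
      logHeatKernel p * fderiv ℝ u p (0, 1)
        - finrank ℝ V / (2 * p.2) * (⟪b i, p.1⟫ * fderiv ℝ u p (b i, 0))
        - fderiv ℝ u p (0, 1) / (2 * p.2) * ⟪b i, p.1⟫ ^ 2
        + logHeatKernel p * finrank ℝ V * fderiv ℝ (fderiv ℝ u) p (b i, 0) (b i, 0)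
        + logHeatKernel p * (⟪b i, p.1⟫ * fderiv ℝ (fderiv ℝ u) p (0, 1) (b i, 0)) := by
    rw [fderiv_logHeatKernel_mul_fderiv_apply hp hu
      (contDiffAt_const.prodMk (contDiffAt_const.inner ℝ contDiffAt_fst)), (h_deriv i).fderiv]
    simp only [ContinuousLinearMap.prod_apply, zero_apply, ContinuousLinearMap.comp_apply,
      ContinuousLinearMap.coe_fst', coe_innerSL_apply, real_inner_self_eq_norm_sq, b.norm_eq_one,
      one_pow, apply_smul_prodMk, h_symm _ (0, 1), real_inner_comm (b i)]
    ring
  simp only [h_term, Finset.sum_add_distrib, Finset.sum_sub_distrib, ← Finset.mul_sum,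
    sum_inner_mul_apply_prodMk_zero, b.sum_sq_inner_right, Finset.sum_const, Finset.card_univ,
    nsmul_eq_mul, h_card, backwardHeatOperator_eq_sum b hu]
  ring

theorem fderiv_logHeatKernel_mul_fderiv_time {p : V × ℝ} (hp : p ∈ heatBall V)
    (hu : ContDiffAt ℝ 2 u p) :
    fderiv ℝ (fun p ↦ logHeatKernel p * fderiv ℝ u p (p.1, 0)) p (0, 1) =
      logHeatKernel p * fderiv ℝ (fderiv ℝ u) p (0, 1) (p.1, 0)
        + (‖p.1‖ ^ 2 / (4 * p.2 ^ 2) - finrank ℝ V / (2 * p.2)) * fderiv ℝ u p (p.1, 0) := by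
  have h_deriv : HasFDerivAt (fun p : V × ℝ ↦ (p.1, (0 : ℝ))) _ p :=
    (hasFDerivAt_fst (𝕜 := ℝ) (p := p)).prodMk (hasFDerivAt_const _ _)
  rw [fderiv_logHeatKernel_mul_fderiv_apply hp hu (by fun_prop), h_deriv.fderiv]
  simp only [ContinuousLinearMap.prod_apply, ContinuousLinearMap.coe_fst', zero_apply,
    inner_zero_right, ← Prod.zero_eq_mk, map_zero]
  ring

theorem sum_fderiv_sub_fderiv_eq [FiniteDimensional ℝ V] {p : V × ℝ} (hp : p ∈ heatBall V)
    (hu : ContDiffAt ℝ 2 u p) {ι : Type*} [Fintype ι] (b : OrthonormalBasis ι ℝ V) :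
    ∑ i, fderiv ℝ (fun p ↦ logHeatKernel p
          * fderiv ℝ u p ((finrank ℝ V : ℝ) • b i, ⟪b i, p.1⟫)) p (b i, 0)
        - fderiv ℝ (fun p ↦ logHeatKernel p * fderiv ℝ u p (p.1, 0)) p (0, 1) =
      finrank ℝ V * (logHeatKernel p * backwardHeatOperator u p)
        - ‖p.1‖ ^ 2 / (4 * p.2 ^ 2) * fderiv ℝ u p (p.1, 2 * p.2) := by
  have hs := hp.1.ne'
  have h_radial := apply_smul_prodMk (fderiv ℝ u p) 1 p.1 (2 * p.2)
  rw [one_smul] at h_radial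
  rw [sum_fderiv_logHeatKernel_mul_fderiv_space hp hu, fderiv_logHeatKernel_mul_fderiv_time hp hu,
    h_radial]
  field_simp
  ring

theorem abs_norm_sq_div_mul_le {p : V × ℝ} (hp : p ∈ heatBall V) {a C : ℝ} (ha : |a| ≤ C) :
    |‖p.1‖ ^ 2 / (4 * p.2 ^ 2) * a| ≤ 2 * finrank ℝ V * C * p.2 ^ (-(5 / 4) : ℝ) := by
  rw [abs_mul, abs_of_nonneg (by positivity), mul_right_comm]
  exact mul_le_mul (norm_sq_div_sq_le hp) ha (abs_nonneg a)
    (mul_nonneg (by positivity) (rpow_nonneg hp.1.le _))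

theorem continuousOn_norm_sq_div :
    ContinuousOn (fun p : V × ℝ ↦ ‖p.1‖ ^ 2 / (4 * p.2 ^ 2)) (heatBall V) :=
  .div (by fun_prop) (by fun_prop) fun _ hp ↦ mul_ne_zero four_ne_zero (pow_ne_zero 2 hp.1.ne')

variable [FiniteDimensional ℝ V] [Nontrivial V] [MeasurableSpace V] [BorelSpace V]

theorem integrableOn_and_integral_fderiv_eq_zero (hu : ∀ p ∈ heatBall V, ContDiffAt ℝ 2 u p)
    {C C' : ℝ} (huC : ∀ p ∈ heatBall V, ‖fderiv ℝ u p‖ ≤ C)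
    (huC' : ∀ p ∈ heatBall V, ‖iteratedFDeriv ℝ 2 u p‖ ≤ C') (hX : ContDiff ℝ 1 X) (v : V × ℝ) :
    IntegrableOn (fun p ↦ fderiv ℝ (fun p ↦ logHeatKernel p * fderiv ℝ u p (X p)) p v)
      (heatBall V) ∧
    ∫ p in heatBall V, fderiv ℝ (fun p ↦ logHeatKernel p * fderiv ℝ u p (X p)) p v = 0 := by
  have h_compact : IsCompact (closure (heatBall V)) := isBounded.isCompact_closure
  obtain ⟨M, hM⟩ := h_compact.exists_bound_of_continuousOn hX.continuous.continuousOn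
  obtain ⟨M', hM'⟩ := h_compact.exists_bound_of_continuousOn
    (hX.continuous_fderiv one_ne_zero).continuousOn
  have hg (p) (hp : p ∈ heatBall V) : ContDiffAt ℝ 1 (fun p ↦ fderiv ℝ u p (X p)) p :=
    ((hu p hp).fderiv_right (by norm_num)).clm_apply hX.contDiffAt
  have hgC (p) (hp : p ∈ heatBall V) : |fderiv ℝ u p (X p)| ≤ C * M :=
    ContinuousLinearMap.le_of_opNorm_le_of_le _ (huC p hp) (hM p (subset_closure hp))
  have hgC' (p) (hp : p ∈ heatBall V) :
      ‖fderiv ℝ (fun p ↦ fderiv ℝ u p (X p)) p‖ ≤ C * M' + C' * M :=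
    (norm_fderiv_fderiv_apply_le (hu p hp)
      (hX.differentiable one_ne_zero p).hasFDerivAt).trans <| by
        have hC := (norm_nonneg (fderiv ℝ u p)).trans (huC p hp)
        have hC' := (norm_nonneg _).trans (huC' p hp)
        gcongr
        exacts [huC p hp, hM' p (subset_closure hp), huC' p hp, hM p (subset_closure hp)]
  exact ⟨integrableOn_fderiv_logHeatKernel_mul hg hgC hgC' v,
    integral_fderiv_logHeatKernel_mul_eq_zero hg hgC hgC' v⟩

theorem integrableOn_norm_sq_div_mul {h : V × ℝ → ℝ} (h_cont : ContinuousOn h (heatBall V)) {C : ℝ}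
    (h_le : ∀ p ∈ heatBall V, |h p| ≤ C) :
    IntegrableOn (fun p ↦ ‖p.1‖ ^ 2 / (4 * p.2 ^ 2) * h p) (heatBall V) :=
  integrableOn_of_continuousOn (continuousOn_norm_sq_div.mul h_cont) fun p hp ↦
    abs_norm_sq_div_mul_le hp (h_le p hp)

theorem integral_norm_sq_div_mul_fderiv (hu : ∀ p ∈ heatBall V, ContDiffAt ℝ 2 u p) {C C' : ℝ}
    (huC : ∀ p ∈ heatBall V, ‖fderiv ℝ u p‖ ≤ C)
    (huC' : ∀ p ∈ heatBall V, ‖iteratedFDeriv ℝ 2 u p‖ ≤ C') :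
    ∫ p in heatBall V, ‖p.1‖ ^ 2 / (4 * p.2 ^ 2) * fderiv ℝ u p (p.1, 2 * p.2) =
      finrank ℝ V * ∫ p in heatBall V, logHeatKernel p * backwardHeatOperator u p := by
  let b := stdOrthonormalBasis ℝ V
  have h_space (i) := integrableOn_and_integral_fderiv_eq_zero hu huC huC'
    (X := fun p ↦ ((finrank ℝ V : ℝ) • b i, ⟪b i, p.1⟫))
    (contDiff_const.prodMk (contDiff_const.inner ℝ contDiff_fst)) (b i, 0)
  have h_time := integrableOn_and_integral_fderiv_eq_zero hu huC huC' (X := fun p ↦ (p.1, 0))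
    (by fun_prop) (0, 1)
  have h_sum := integrable_finsetSum Finset.univ fun i _ ↦ (h_space i).1
  have h_int := integral_sub h_sum h_time.1
  simp only [integral_finsetSum _ fun i _ ↦ (h_space i).1, (h_space _).2, h_time.2,
    Finset.sum_const_zero, sub_zero] at h_int
  obtain ⟨M, hM⟩ := (isBounded (V := V)).isCompact_closure.exists_bound_of_continuousOn
    (f := fun p ↦ (p.1, 2 * p.2)) (by fun_prop)
  have h_w : IntegrableOn (fun p ↦ ‖p.1‖ ^ 2 / (4 * p.2 ^ 2) * fderiv ℝ u p (p.1, 2 * p.2))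
      (heatBall V) := by
    refine integrableOn_norm_sq_div_mul (fun p hp ↦ ?_) (C := C * M) fun p hp ↦
      ContinuousLinearMap.le_of_opNorm_le_of_le _ (huC p hp) (hM p (subset_closure hp))
    exact (((hu p hp).fderiv_right (m := 0) (by norm_num)).continuousAt.clm_apply
      (by fun_prop)).continuousWithinAt
  have h_op : IntegrableOn (fun p ↦ finrank ℝ V * (logHeatKernel p * backwardHeatOperator u p))
      (heatBall V) := by
    refine IntegrableOn.congr_fun ((h_sum.sub h_time.1).add h_w) (fun p hp ↦ ?_) measurableSet
    have := sum_fderiv_sub_fderiv_eq hp (hu p hp) b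
    simp only [Pi.add_apply, Pi.sub_apply]
    linarith
  rw [setIntegral_congr_fun measurableSet fun p hp ↦ sum_fderiv_sub_fderiv_eq hp (hu p hp) b,
    integral_sub h_op h_w, integral_const_mul] at h_int
  linarith

end heatBall

end FluxIdentity

section ParabolicRescale

variable {V : Type*} [NormedAddCommGroup V] [InnerProductSpace ℝ V]

/-- The parabolic dilation by `r`, combined with time reversal and with the translation taking the
origin to `p₀`. It maps `heatBall V` to the backward heat ball of radius `r` centred at `p₀`. -/
def parabolicRescale (p₀ : V × ℝ) (r : ℝ) (p : V × ℝ) : V × ℝ :=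
  (p₀.1 + r • p.1, p₀.2 - r ^ 2 * p.2)

namespace parabolicRescale

variable {p₀ p : V × ℝ} {q : V × ℝ → ℝ} {r : ℝ}

theorem contDiff {n : WithTop ℕ∞} : ContDiff ℝ n (parabolicRescale p₀ r) :=
  (contDiff_const.add (contDiff_fst.const_smul r)).prodMk
    (contDiff_const.sub (contDiff_const.mul contDiff_snd))

theorem hasDerivAt_radius :
    HasDerivAt (fun r ↦ parabolicRescale p₀ r p) (p.1, -(2 * r * p.2)) r := by
  refine .prodMk ?_ ?_
  · simpa only [one_smul] using ((hasDerivAt_id' r).smul_const p.1).const_add p₀.1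
  · simpa only [Nat.cast_ofNat, Nat.add_one_sub_one, pow_one] using
      (((hasDerivAt_pow 2 r).mul_const p.2).const_sub p₀.2)

theorem hasFDerivAt : HasFDerivAt (parabolicRescale p₀ r)
    ((r • ContinuousLinearMap.fst ℝ V ℝ).prod (-(r ^ 2 • ContinuousLinearMap.snd ℝ V ℝ))) p :=
  ((hasFDerivAt_fst.const_smul r).const_add p₀.1).prodMk
    ((hasFDerivAt_snd.const_mul (r ^ 2)).const_sub p₀.2)

theorem fderiv_comp_apply (hq : DifferentiableAt ℝ q (parabolicRescale p₀ r p)) (v : V × ℝ) :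
    fderiv ℝ (q ∘ parabolicRescale p₀ r) p v =
      fderiv ℝ q (parabolicRescale p₀ r p) (r • v.1, -(r ^ 2 * v.2)) := by
  rw [(hq.hasFDerivAt.comp p hasFDerivAt).fderiv]
  rfl

theorem fderiv_comp_radial (hq : DifferentiableAt ℝ q (parabolicRescale p₀ r p)) :
    fderiv ℝ (q ∘ parabolicRescale p₀ r) p (p.1, 2 * p.2) =
      r * fderiv ℝ q (parabolicRescale p₀ r p) (p.1, -(2 * r * p.2)) := by
  rw [fderiv_comp_apply hq, ← smul_eq_mul r, ← map_smul, Prod.smul_mk, smul_eq_mul]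
  ring_nf

theorem backwardHeatOperator_comp [FiniteDimensional ℝ V]
    (hq : ContDiffAt ℝ 2 q (parabolicRescale p₀ r p)) :
    backwardHeatOperator (q ∘ parabolicRescale p₀ r) p =
      r ^ 2 * (Δ (fun y ↦ q (y, (parabolicRescale p₀ r p).2)) (parabolicRescale p₀ r p).1
        - deriv (fun t ↦ q ((parabolicRescale p₀ r p).1, t)) (parabolicRescale p₀ r p).2) := by
  have h_comp : ContDiffAt ℝ 2 (q ∘ parabolicRescale p₀ r) p := hq.comp p contDiff.contDiffAt
  have h_second (v : V) : fderiv ℝ (fderiv ℝ (q ∘ parabolicRescale p₀ r)) p (v, 0) (v, 0) =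
      r ^ 2 * fderiv ℝ (fderiv ℝ q) (parabolicRescale p₀ r p) (v, 0) (v, 0) := by
    have h_diff : DifferentiableAt ℝ (fun p ↦ fderiv ℝ q p (v, 0)) (parabolicRescale p₀ r p) :=
      (hasFDerivAt_fderiv_apply hq (hasFDerivAt_const _ _)).differentiableAt
    have h_first : (fun p ↦ fderiv ℝ (q ∘ parabolicRescale p₀ r) p (v, 0)) =ᶠ[𝓝 p]
        fun p ↦ r * ((fun p ↦ fderiv ℝ q p (v, 0)) ∘ parabolicRescale p₀ r) p := by
      filter_upwards [(contDiff (n := 0)).continuous.continuousAt.eventually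
        (hq.eventually (by simp))] with p hp
      rw [fderiv_comp_apply (hp.differentiableAt two_ne_zero), apply_smul_prodMk]
      simp
    rw [← fderiv_fderiv_apply_const h_comp, h_first.fderiv_eq, fderiv_const_mul
      (h_diff.comp p hasFDerivAt.differentiableAt), smul_apply, fderiv_comp_apply h_diff,
      apply_smul_prodMk, fderiv_fderiv_apply_const hq, smul_eq_mul, mul_zero, neg_zero]
    ring
  rw [backwardHeatOperator_eq_sum (stdOrthonormalBasis ℝ V) h_comp,
    laplacian_prodMk_left (stdOrthonormalBasis ℝ V) hq,
    deriv_prodMk_right (hq.differentiableAt two_ne_zero),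
    fderiv_comp_apply (hq.differentiableAt two_ne_zero), apply_smul_prodMk, ← Prod.zero_eq_mk,
    map_zero, Finset.sum_congr rfl fun i _ ↦ h_second _, ← Finset.mul_sum]
  ring

end parabolicRescale

end ParabolicRescale

section RadialDerivative

theorem univ_prod_Ioo_subset_interior {E : Type*} [TopologicalSpace E] {a b : ℝ}
    {S : Set ℝ} (h : Ioo a b ⊆ S) :
    (univ : Set E) ×ˢ Ioo a b ⊆ interior (univ ×ˢ S) :=
  interior_maximal (prod_mono_right h) (isOpen_univ.prod isOpen_Ioo)

variable {V : Type*} [NormedAddCommGroup V] [InnerProductSpace ℝ V]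

namespace heatBall

variable [FiniteDimensional ℝ V] [Nontrivial V]

theorem subset_prod : heatBall V ⊆
    Metric.closedBall 0 (9 / 2 * finrank ℝ V) ×ˢ Icc 0 (1 / (4 * π)) := fun p hp ↦ by
  refine ⟨mem_closedBall_zero_iff.2 (norm_fst_le hp), hp.1.le, ?_⟩
  rw [le_div_iff₀ (by positivity), mul_comm]
  exact four_pi_mul_snd_le_one hp

theorem integral_norm_sq_div_mul_fderiv_of_contDiffOn [MeasurableSpace V] [BorelSpace V]
    {u : V × ℝ → ℝ} {T : ℝ} (hT : 1 < 4 * π * T) (hu : ContDiffOn ℝ 2 u (univ ×ˢ Ico 0 T)) :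
    ∫ p in heatBall V, ‖p.1‖ ^ 2 / (4 * p.2 ^ 2) * fderiv ℝ u p (p.1, 2 * p.2) =
      finrank ℝ V * ∫ p in heatBall V, logHeatKernel p * backwardHeatOperator u p := by
  have hT' : 1 / (4 * π) < T := (div_lt_iff₀' (by positivity)).2 hT
  have h_uniqueDiff : UniqueDiffOn ℝ ((univ : Set V) ×ˢ Ico 0 T) :=
    uniqueDiffOn_univ.prod (uniqueDiffOn_Ico 0 T)
  have h_compact : IsCompact (Metric.closedBall (0 : V) (9 / 2 * finrank ℝ V) ×ˢ
      Icc 0 (1 / (4 * π))) := (isCompact_closedBall _ _).prod isCompact_Icc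
  have h_subset : Metric.closedBall (0 : V) (9 / 2 * finrank ℝ V) ×ˢ Icc 0 (1 / (4 * π)) ⊆
      univ ×ˢ Ico 0 T := prod_mono (subset_univ _) fun s hs ↦ ⟨hs.1, hs.2.trans_lt hT'⟩
  have h_interior (p) (hp : p ∈ heatBall V) : p ∈ interior ((univ : Set V) ×ˢ Ico 0 T) :=
    univ_prod_Ioo_subset_interior Ioo_subset_Ico_self
      ⟨mem_univ _, hp.1, (subset_prod hp).2.2.trans_lt hT'⟩
  obtain ⟨C, hC⟩ := exists_norm_iteratedFDeriv_le_of_contDiffOn (m := 1)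
    (hu.of_le (by norm_num)) h_uniqueDiff h_compact h_subset
  obtain ⟨C', hC'⟩ := exists_norm_iteratedFDeriv_le_of_contDiffOn (m := 2)
    hu h_uniqueDiff h_compact h_subset
  refine integral_norm_sq_div_mul_fderiv (C := C) (C' := C')
    (fun p hp ↦ hu.contDiffAt (mem_interior_iff_mem_nhds.1 (h_interior p hp))) (fun p hp ↦ ?_)
    fun p hp ↦ hC' p ⟨subset_prod hp, h_interior p hp⟩
  rw [← norm_iteratedFDeriv_one]
  exact hC p ⟨subset_prod hp, h_interior p hp⟩

end heatBall

namespace parabolicRescale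

variable {p₀ p : V × ℝ} {q : V × ℝ → ℝ} {r R : ℝ}

theorem continuous_uncurry : Continuous fun x : ℝ × V × ℝ ↦ parabolicRescale p₀ x.1 x.2 := by
  unfold parabolicRescale
  fun_prop

theorem contDiffOn_comp (hq : ContDiffOn ℝ 2 q (univ ×ˢ Ioc 0 p₀.2)) (hr : 0 < r) :
    ContDiffOn ℝ 2 (q ∘ parabolicRescale p₀ r) (univ ×ˢ Ico 0 (p₀.2 / r ^ 2)) := by
  refine hq.comp contDiff.contDiffOn fun p hp ↦ ⟨mem_univ _, ?_, ?_⟩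
  · exact sub_pos.2 ((lt_div_iff₀' (by positivity)).1 hp.2.2)
  · exact sub_le_self _ (mul_nonneg (sq_nonneg r) hp.2.1)

variable [FiniteDimensional ℝ V] [Nontrivial V]

theorem mem_prod (hr : r ∈ Icc 0 R) (hp : p ∈ heatBall V) : parabolicRescale p₀ r p ∈
    Metric.closedBall p₀.1 (R * (9 / 2 * finrank ℝ V)) ×ˢ
      Icc (p₀.2 - R ^ 2 / (4 * π)) p₀.2 := by
  refine ⟨?_, ?_, ?_⟩
  · rw [parabolicRescale, mem_closedBall_iff_norm, add_sub_cancel_left, norm_smul,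
      norm_of_nonneg hr.1]
    exact mul_le_mul hr.2 (heatBall.norm_fst_le hp) (norm_nonneg _) (hr.1.trans hr.2)
  · have h_le : r ^ 2 * p.2 ≤ R ^ 2 * (1 / (4 * π)) :=
      mul_le_mul (pow_le_pow_left₀ hr.1 hr.2 2) (heatBall.subset_prod hp).2.2 hp.1.le (sq_nonneg R)
    simp only [parabolicRescale]
    linarith [mul_one_div (R ^ 2) (4 * π)]
  · exact sub_le_self _ (mul_nonneg (sq_nonneg r) hp.1.le)

theorem mem_interior (hr : r ∈ Ioc 0 R) (hR : R ^ 2 < 4 * π * p₀.2) (hp : p ∈ heatBall V) :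
    parabolicRescale p₀ r p ∈ interior ((univ : Set V) ×ˢ Ioc 0 p₀.2) := by
  have hR' : R ^ 2 / (4 * π) < p₀.2 := (div_lt_iff₀' (by positivity)).2 hR
  have h_mem := mem_prod (p₀ := p₀) (Ioc_subset_Icc_self hr) hp
  refine univ_prod_Ioo_subset_interior Ioo_subset_Ioc_self ⟨mem_univ _, ?_, ?_⟩
  · linarith [h_mem.2.1]
  · exact sub_lt_self _ (mul_pos (pow_pos hr.1 2) hp.1)

theorem exists_norm_iteratedFDeriv_le {m : ℕ} (hq : ContDiffOn ℝ m q (univ ×ˢ Ioc 0 p₀.2))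
    (hR : R ^ 2 < 4 * π * p₀.2) :
    ∃ C, ∀ r ∈ Ioc 0 R, ∀ p ∈ heatBall V, ‖iteratedFDeriv ℝ m q (parabolicRescale p₀ r p)‖ ≤ C := by
  have hR' : R ^ 2 / (4 * π) < p₀.2 := (div_lt_iff₀' (by positivity)).2 hR
  obtain ⟨C, hC⟩ := exists_norm_iteratedFDeriv_le_of_contDiffOn hq
    (uniqueDiffOn_univ.prod (uniqueDiffOn_Ioc 0 p₀.2))
    ((isCompact_closedBall p₀.1 (R * (9 / 2 * finrank ℝ V))).prod isCompact_Icc)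
    (prod_mono (subset_univ _) fun t ht ↦ ⟨(sub_pos.2 hR').trans_le ht.1, ht.2⟩)
  exact ⟨C, fun r hr p hp ↦ hC _ ⟨mem_prod (Ioc_subset_Icc_self hr) hp, mem_interior hr hR hp⟩⟩

theorem continuousOn_fderiv (hq : ContDiffOn ℝ 2 q (univ ×ˢ Ioc 0 p₀.2))
    (hR : R ^ 2 < 4 * π * p₀.2) :
    ContinuousOn (fun x : ℝ × V × ℝ ↦ fderiv ℝ q (parabolicRescale p₀ x.1 x.2))
      (Ioc 0 R ×ˢ heatBall V) := fun x hx ↦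
  (((hq.contDiffAt (mem_interior_iff_mem_nhds.1 (mem_interior hx.1 hR hx.2))).fderiv_right
    (m := 1) (by norm_num)).continuousAt.comp
      (f := fun x : ℝ × V × ℝ ↦ parabolicRescale p₀ x.1 x.2)
      continuous_uncurry.continuousAt).continuousWithinAt

variable [MeasurableSpace V] [BorelSpace V]

theorem integral_norm_sq_div_mul_fderiv_eq (hq : ContDiffOn ℝ 2 q (univ ×ˢ Ioc 0 p₀.2))
    (hr : 0 < r) (hr' : r ^ 2 < 4 * π * p₀.2) :
    ∫ p in heatBall V, ‖p.1‖ ^ 2 / (4 * p.2 ^ 2)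
        * fderiv ℝ q (parabolicRescale p₀ r p) (p.1, -(2 * r * p.2)) =
      finrank ℝ V / r * ∫ p in heatBall V, logHeatKernel p
        * backwardHeatOperator (q ∘ parabolicRescale p₀ r) p := by
  have h_T : 1 < 4 * π * (p₀.2 / r ^ 2) := by
    rw [← mul_div_assoc, one_lt_div (by positivity)]
    exact hr'
  rw [div_mul_eq_mul_div, ← heatBall.integral_norm_sq_div_mul_fderiv_of_contDiffOn h_T
    (contDiffOn_comp hq hr), eq_div_iff hr.ne', ← integral_mul_const]
  refine setIntegral_congr_fun heatBall.measurableSet fun p hp ↦ ?_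
  have hq' := hq.contDiffAt (mem_interior_iff_mem_nhds.1 (mem_interior ⟨hr, le_rfl⟩ hr' hp))
  simp only [fderiv_comp_radial (hq'.differentiableAt two_ne_zero)]
  ring

theorem integral_sub_integral_eq (hq : ContDiffOn ℝ 2 q (univ ×ˢ Ioc 0 p₀.2)) {r₁ r₂ : ℝ}
    (hr₁ : 0 < r₁) (hr : r₁ ≤ r₂) (hr₂ : r₂ ^ 2 < 4 * π * p₀.2) :
    (∫ p in heatBall V, ‖p.1‖ ^ 2 / (4 * p.2 ^ 2) * q (parabolicRescale p₀ r₂ p))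
      - ∫ p in heatBall V, ‖p.1‖ ^ 2 / (4 * p.2 ^ 2) * q (parabolicRescale p₀ r₁ p) =
    ∫ r in r₁..r₂, finrank ℝ V / r * ∫ p in heatBall V, logHeatKernel p
        * backwardHeatOperator (q ∘ parabolicRescale p₀ r) p := by
  have h_Ioc {r : ℝ} (h : r ∈ Icc r₁ r₂) : r ∈ Ioc 0 r₂ := ⟨hr₁.trans_le h.1, h.2⟩
  have h_contDiffAt {r : ℝ} (h : r ∈ Icc r₁ r₂) {p : V × ℝ} (hp : p ∈ heatBall V) :
      ContDiffAt ℝ 2 q (parabolicRescale p₀ r p) :=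
    hq.contDiffAt (mem_interior_iff_mem_nhds.1 (mem_interior (h_Ioc h) hr₂ hp))
  obtain ⟨C, hC⟩ := exists_norm_iteratedFDeriv_le (m := 0) (hq.of_le zero_le_two) hr₂
  obtain ⟨C', hC'⟩ := exists_norm_iteratedFDeriv_le (m := 1) (hq.of_le one_le_two) hr₂
  simp only [norm_iteratedFDeriv_zero, norm_iteratedFDeriv_one] at hC hC'
  obtain ⟨M, hM⟩ := (isCompact_Icc.prod (heatBall.isBounded (V := V)).isCompact_closure)
    |>.exists_bound_of_continuousOn (s := Icc r₁ r₂ ×ˢ closure (heatBall V))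
      (f := fun x ↦ (x.2.1, -(2 * x.1 * x.2.2))) (by fun_prop)
  rw [setIntegral_sub_eq_intervalIntegral heatBall.measurableSet hr
    (f := fun r p ↦ ‖p.1‖ ^ 2 / (4 * p.2 ^ 2) * q (parabolicRescale p₀ r p))
    (f' := fun r p ↦ ‖p.1‖ ^ 2 / (4 * p.2 ^ 2)
      * fderiv ℝ q (parabolicRescale p₀ r p) (p.1, -(2 * r * p.2)))
    (fun p hp r h ↦ (((h_contDiffAt h hp).differentiableAt two_ne_zero).hasFDerivAt.comp_hasDerivAt
      r hasDerivAt_radius).const_mul _)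
    (fun r h ↦ heatBall.integrableOn_norm_sq_div_mul (fun p hp ↦ ?_) fun p hp ↦
      hC r (h_Ioc h) p hp) ?_
    (fun p hp r h ↦ heatBall.abs_norm_sq_div_mul_le hp
      (ContinuousLinearMap.le_of_opNorm_le_of_le _ (hC' r (h_Ioc h) p hp)
        (hM (r, p) ⟨h, subset_closure hp⟩)))
    (heatBall.integrableOn_rpow.const_mul _)]
  · refine intervalIntegral.integral_congr fun r h ↦ ?_
    rw [uIcc_of_le hr] at h
    exact integral_norm_sq_div_mul_fderiv_eq hq (h_Ioc h).1
      ((pow_le_pow_left₀ (h_Ioc h).1.le h.2 2).trans_lt hr₂)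
  · have h_weight := (heatBall.continuousOn_norm_sq_div (V := V)).comp continuousOn_snd
      (mapsTo_snd_prod (s := Icc r₁ r₂))
    exact h_weight.mul (((continuousOn_fderiv hq hr₂).mono
      (prod_mono_left fun r h ↦ h_Ioc h)).clm_apply (by fun_prop))
  · exact ((h_contDiffAt h hp).continuousAt.comp hasFDerivAt.continuousAt).continuousWithinAt

end parabolicRescale

end RadialDerivative

section BackwardHeatBall

variable {V : Type*} [NormedAddCommGroup V] [InnerProductSpace ℝ V]

/-- The backward heat kernel centred at `p₀ = (x₀, t₀)`, as a function of `p = (y, t)` with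
`t < t₀`. -/
noncomputable def backwardHeatKernel (p₀ p : V × ℝ) : ℝ :=
  (4 * π * (p₀.2 - p.2)) ^ (-(finrank ℝ V : ℝ) / 2) *
    exp (-‖p₀.1 - p.1‖ ^ 2 / (4 * (p₀.2 - p.2)))

/-- The heat ball of radius `r` centred at `p₀`, that is the superlevel set of the backward heat
kernel at height `r ^ (-d)` in dimension `d`. Only positive times are admitted. -/
def backwardHeatBall (p₀ : V × ℝ) (r : ℝ) : Set (V × ℝ) :=
  {p | 0 < p.2 ∧ p.2 < p₀.2 ∧ r ^ (-(finrank ℝ V : ℝ)) ≤ backwardHeatKernel p₀ p}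

variable {p₀ p : V × ℝ} {r : ℝ}

theorem backwardHeatKernel_pos (hp : p.2 < p₀.2) : 0 < backwardHeatKernel p₀ p := by
  have := sub_pos.2 hp
  rw [backwardHeatKernel]
  positivity

theorem log_backwardHeatKernel (hp : p.2 < p₀.2) :
    log (backwardHeatKernel p₀ p) = logHeatKernel (p₀ - p) := by
  have := sub_pos.2 hp
  rw [backwardHeatKernel, log_mul (by positivity) (by positivity), log_exp,
    log_rpow (by positivity), logHeatKernel]
  simp only [Prod.fst_sub, Prod.snd_sub]
  ring

theorem hasGradientAt_log_backwardHeatKernel [CompleteSpace V] {y : V} {t : ℝ} (ht : t < p₀.2) :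
    HasGradientAt (fun z ↦ log (backwardHeatKernel p₀ (z, t)))
      ((2 * (p₀.2 - t))⁻¹ • (p₀.1 - y)) y := by
  have hs : 0 < (p₀ - (y, t)).2 := sub_pos.2 ht
  have h_sub : HasFDerivAt (fun z ↦ p₀ - (z, t)) (-ContinuousLinearMap.inl ℝ V ℝ) y :=
    (hasFDerivAt_prodMk_left y t).const_sub p₀
  have h_slice := (hasFDerivAt_logHeatKernel hs).comp (f := fun z ↦ p₀ - (z, t)) y h_sub
  simp only [log_backwardHeatKernel (p := (_, t)) ht]
  refine h_slice.congr_fderiv (ContinuousLinearMap.ext fun v ↦ ?_)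
  simp

theorem norm_gradient_log_backwardHeatKernel_add_sq [CompleteSpace V] (hp : p.2 < p₀.2) (c : ℝ) :
    ‖∇ (fun z ↦ log (backwardHeatKernel p₀ (z, p.2)) + c) p.1‖ ^ 2 =
      ‖p₀.1 - p.1‖ ^ 2 / (4 * (p₀.2 - p.2) ^ 2) := by
  have h_grad : HasGradientAt (fun z ↦ log (backwardHeatKernel p₀ (z, p.2)) + c) _ p.1 :=
    (hasGradientAt_log_backwardHeatKernel hp).hasFDerivAt.add_const c
  have hs : 0 < p₀.2 - p.2 := sub_pos.2 hp
  rw [h_grad.gradient, norm_smul, norm_of_nonneg (by positivity)]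
  field_simp
  ring

namespace backwardHeatBall

theorem measurableSet [FiniteDimensional ℝ V] [MeasurableSpace V] [BorelSpace V] :
    MeasurableSet (backwardHeatBall p₀ r) := by
  unfold backwardHeatBall backwardHeatKernel
  measurability

theorem contDiffAt_slice {q : V × ℝ → ℝ} {n : WithTop ℕ∞}
    (hq : ContDiffOn ℝ n q (univ ×ˢ Ioc 0 p₀.2)) (hp : p ∈ backwardHeatBall p₀ r) :
    ContDiffAt ℝ n (fun y ↦ q (y, p.2)) p.1 := by
  have h_mem : univ ×ˢ Ioc 0 p₀.2 ∈ 𝓝 p :=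
    prod_mem_nhds univ_mem (Ioc_mem_nhds hp.1 hp.2.1)
  exact (hq.contDiffAt h_mem).comp p.1 (contDiff_prodMk_left p.2).contDiffAt

end backwardHeatBall

namespace parabolicRescale

theorem snd_lt_iff (hr : 0 < r) : (parabolicRescale p₀ r p).2 < p₀.2 ↔ 0 < p.2 := by
  rw [parabolicRescale, sub_lt_self_iff, mul_pos_iff_of_pos_left (pow_pos hr 2)]

theorem log_backwardHeatKernel_add (hr : 0 < r) (hp : 0 < p.2) :
    log (backwardHeatKernel p₀ (parabolicRescale p₀ r p)) + finrank ℝ V * log r =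
      logHeatKernel p := by
  rw [log_backwardHeatKernel ((snd_lt_iff hr).2 hp)]
  simp only [logHeatKernel, parabolicRescale, Prod.fst_sub, Prod.snd_sub, sub_add_cancel_left,
    norm_neg, norm_smul, norm_of_nonneg hr.le, sub_sub_cancel]
  rw [mul_left_comm, log_mul (by positivity) (by positivity), log_pow]
  field_simp
  push_cast
  ring

theorem rpow_le_backwardHeatKernel_iff (hr : 0 < r) (hp : 0 < p.2) :
    r ^ (-(finrank ℝ V : ℝ)) ≤ backwardHeatKernel p₀ (parabolicRescale p₀ r p) ↔
      0 ≤ logHeatKernel p := by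
  rw [← log_le_log_iff (by positivity) (backwardHeatKernel_pos ((snd_lt_iff hr).2 hp)),
    log_rpow hr, ← log_backwardHeatKernel_add hr hp, neg_mul, neg_le_iff_add_nonneg]

theorem eq_prodMap : parabolicRescale p₀ r =
    Prod.map (fun y ↦ p₀.1 + r • y) fun t ↦ p₀.2 + (-r ^ 2) • t := by
  ext p
  · rfl
  · simp only [parabolicRescale, Prod.map_snd, smul_eq_mul, neg_mul, sub_eq_add_neg]

theorem measurableEmbedding [MeasurableSpace V] [BorelSpace V] (hr : r ≠ 0) :
    MeasurableEmbedding (parabolicRescale p₀ r) := by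
  have h_sq : -r ^ 2 ≠ 0 := neg_ne_zero.2 (pow_ne_zero 2 hr)
  rw [eq_prodMap]
  exact ((measurableEmbedding_addLeft p₀.1).comp (measurableEmbedding_const_smul₀ hr)).prodMap
    ((measurableEmbedding_addLeft p₀.2).comp (measurableEmbedding_const_smul₀ h_sq))

variable [FiniteDimensional ℝ V]

theorem preimage_backwardHeatBall [Nontrivial V] (hr : 0 < r) (hr' : r ^ 2 < 4 * π * p₀.2) :
    parabolicRescale p₀ r ⁻¹' backwardHeatBall p₀ r = heatBall V := by
  ext p
  refine ⟨fun hp ↦ ?_, fun hp ↦ ?_⟩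
  · have hs := (snd_lt_iff hr).1 hp.2.1
    exact ⟨hs, (rpow_le_backwardHeatKernel_iff hr hs).1 hp.2.2⟩
  · exact ⟨(interior_subset (mem_interior ⟨hr, le_rfl⟩ hr' hp)).2.1, (snd_lt_iff hr).2 hp.1,
      (rpow_le_backwardHeatKernel_iff hr hp.1).2 hp.2⟩

variable [MeasurableSpace V] [BorelSpace V]

theorem map_volume (hr : 0 < r) : volume.map (parabolicRescale p₀ r) =
    ENNReal.ofReal (r ^ (finrank ℝ V + 2))⁻¹ • volume := by
  have h_sq : -r ^ 2 ≠ 0 := neg_ne_zero.2 (pow_ne_zero 2 hr.ne')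
  rw [eq_prodMap, Measure.volume_eq_prod, ← Measure.map_prod_map _ _ (by fun_prop) (by fun_prop),
    map_const_add_smul_addHaar _ _ hr.ne', map_const_add_smul_addHaar _ _ h_sq,
    Measure.prod_smul_left, Measure.prod_smul_right, smul_smul,
    ← ENNReal.ofReal_mul (abs_nonneg _), ← abs_mul, ← mul_inv, finrank_self, pow_one, mul_neg,
    ← pow_add, inv_neg, abs_neg, abs_of_pos (by positivity)]

end parabolicRescale

namespace backwardHeatBall

variable [FiniteDimensional ℝ V] [Nontrivial V] [MeasurableSpace V] [BorelSpace V]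

theorem setIntegral_eq (hr : 0 < r) (hr' : r ^ 2 < 4 * π * p₀.2) (f : V × ℝ → ℝ) :
    ∫ p in backwardHeatBall p₀ r, f p =
      r ^ (finrank ℝ V + 2) * ∫ p in heatBall V, f (parabolicRescale p₀ r p) := by
  have h_pos : 0 < r ^ (finrank ℝ V + 2) := by positivity
  rw [← parabolicRescale.preimage_backwardHeatBall hr hr',
    ← (parabolicRescale.measurableEmbedding hr.ne').setIntegral_map, parabolicRescale.map_volume hr,
    Measure.restrict_smul, integral_smul_measure, ENNReal.toReal_ofReal (by positivity),
    smul_eq_mul, mul_inv_cancel_left₀ h_pos.ne']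

theorem integral_norm_gradient_sq_mul (hr : 0 < r) (hr' : r ^ 2 < 4 * π * p₀.2) (q : V × ℝ → ℝ) :
    r ^ (-(finrank ℝ V : ℝ)) * ∫ p in backwardHeatBall p₀ r,
        ‖∇ (fun z ↦ log (backwardHeatKernel p₀ (z, p.2)) + finrank ℝ V * log r) p.1‖ ^ 2 * q p =
      ∫ p in heatBall V, ‖p.1‖ ^ 2 / (4 * p.2 ^ 2) * q (parabolicRescale p₀ r p) := by
  rw [setIntegral_eq hr hr', rpow_neg hr.le, rpow_natCast, pow_add, mul_assoc,
    inv_mul_cancel_left₀ (by positivity), ← integral_const_mul]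
  refine setIntegral_congr_fun heatBall.measurableSet fun p hp ↦ ?_
  have hs : 0 < p.2 := hp.1
  simp only [norm_gradient_log_backwardHeatKernel_add_sq ((parabolicRescale.snd_lt_iff hr).2 hs)]
  simp only [parabolicRescale, sub_add_cancel_left, sub_sub_cancel, norm_neg, norm_smul,
    norm_of_nonneg hr.le]
  field_simp

theorem integral_log_mul {q : V × ℝ → ℝ} (hq : ContDiffOn ℝ 2 q (univ ×ˢ Ioc 0 p₀.2))
    (hr : 0 < r) (hr' : r ^ 2 < 4 * π * p₀.2) :
    finrank ℝ V / r ^ (finrank ℝ V + 1) * ∫ p in backwardHeatBall p₀ r,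
        (log (backwardHeatKernel p₀ p) + finrank ℝ V * log r) *
          (deriv (fun t ↦ q (p.1, t)) p.2 - Δ (fun y ↦ q (y, p.2)) p.1) =
      -(finrank ℝ V / r * ∫ p in heatBall V, logHeatKernel p
        * backwardHeatOperator (q ∘ parabolicRescale p₀ r) p) := by
  rw [setIntegral_eq hr hr', ← mul_neg, ← integral_neg, ← mul_assoc, ← integral_const_mul,
    ← integral_const_mul]
  refine setIntegral_congr_fun heatBall.measurableSet fun p hp ↦ ?_
  simp only [parabolicRescale.backwardHeatOperator_comp (hq.contDiffAt
    (mem_interior_iff_mem_nhds.1 (parabolicRescale.mem_interior ⟨hr, le_rfl⟩ hr' hp))),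
    parabolicRescale.log_backwardHeatKernel_add hr hp.1]
  field_simp
  ring

theorem mean_sub_mean_eq {q : V × ℝ → ℝ} (hq : ContDiffOn ℝ 2 q (univ ×ˢ Ioc 0 p₀.2))
    {r₁ r₂ : ℝ} (hr₁ : 0 < r₁) (hr : r₁ ≤ r₂) (hr₂ : r₂ ^ 2 < 4 * π * p₀.2) :
    (r₂ ^ (-(finrank ℝ V : ℝ)) * ∫ p in backwardHeatBall p₀ r₂,
        ‖∇ (fun z ↦ log (backwardHeatKernel p₀ (z, p.2)) + finrank ℝ V * log r₂) p.1‖ ^ 2 * q p)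
      - r₁ ^ (-(finrank ℝ V : ℝ)) * ∫ p in backwardHeatBall p₀ r₁,
        ‖∇ (fun z ↦ log (backwardHeatKernel p₀ (z, p.2)) + finrank ℝ V * log r₁) p.1‖ ^ 2 * q p =
    -∫ r in r₁..r₂, finrank ℝ V / r ^ (finrank ℝ V + 1) * ∫ p in backwardHeatBall p₀ r,
      (log (backwardHeatKernel p₀ p) + finrank ℝ V * log r) *
        (deriv (fun t ↦ q (p.1, t)) p.2 - Δ (fun y ↦ q (y, p.2)) p.1) := by
  have h_sq {r : ℝ} (h : r ∈ Icc r₁ r₂) : r ^ 2 < 4 * π * p₀.2 :=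
    (pow_le_pow_left₀ (hr₁.le.trans h.1) h.2 2).trans_lt hr₂
  rw [integral_norm_gradient_sq_mul (hr₁.trans_le hr) hr₂,
    integral_norm_gradient_sq_mul hr₁ (h_sq (left_mem_Icc.2 hr)),
    parabolicRescale.integral_sub_integral_eq hq hr₁ hr hr₂, ← intervalIntegral.integral_neg]
  refine intervalIntegral.integral_congr fun r h ↦ ?_
  rw [uIcc_of_le hr] at h
  simp only [integral_log_mul hq (hr₁.trans_le h.1) (h_sq h), neg_neg]

end backwardHeatBall

end BackwardHeatBall

theorem stmt13_general {V : Type*} [NormedAddCommGroup V] [InnerProductSpace ℝ V]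
    [FiniteDimensional ℝ V] [MeasurableSpace V] [BorelSpace V] {n : ℕ} (hn : 1 ≤ n)
    (b : OrthonormalBasis (Fin n) ℝ V) {x₀ : V} {t₀ : ℝ} {hatH : V → ℝ → ℝ}
    (hhatH : ∀ y t, hatH y t =
      (4 * π * (t₀ - t)) ^ (-(n : ℝ) / 2) * exp (-‖x₀ - y‖ ^ 2 / (4 * (t₀ - t))))
    {E : ℝ → Set (V × ℝ)}
    (hE : ∀ r, E r = {p | 0 < p.2 ∧ p.2 < t₀ ∧ r ^ (-(n : ℝ)) ≤ hatH p.1 p.2})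
    {Q : V → ℝ → ℝ} (hQ : ContDiffOn ℝ 2 (fun p : V × ℝ ↦ Q p.1 p.2) (univ ×ˢ Ioc 0 t₀))
    {I : ℝ → ℝ}
    (hI : ∀ r, I r = r ^ (-(n : ℝ)) * ∫ p in E r,
      ‖gradient (fun z ↦ log (hatH z p.2) + n * log r) p.1‖ ^ 2 * Q p.1 p.2)
    {r₁ r₂ : ℝ} (hr₁ : 0 < r₁) (hr : r₁ ≤ r₂) (hr₂ : r₂ ^ 2 < 4 * π * t₀) :
    I r₂ - I r₁ = -∫ r in r₁..r₂, n / r ^ (n + 1) * ∫ p in E r,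
      (log (hatH p.1 p.2) + n * log r) * (deriv (fun s ↦ Q p.1 s) p.2 -
        ∑ i, fderiv ℝ (fun y ↦ fderiv ℝ (fun z ↦ Q z p.2) y (b i)) p.1 (b i)) := by
  obtain rfl : finrank ℝ V = n := by simpa using Module.finrank_eq_card_basis b.toBasis
  have : Nontrivial V := Module.nontrivial_of_finrank_pos hn
  obtain rfl : hatH = fun y t ↦ backwardHeatKernel (x₀, t₀) (y, t) := funext₂ hhatH
  obtain rfl : E = backwardHeatBall (x₀, t₀) := funext hE
  rw [hI, hI]
  refine (backwardHeatBall.mean_sub_mean_eq hQ hr₁ hr hr₂).trans (congrArg Neg.neg ?_)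
  refine intervalIntegral.integral_congr fun r _ ↦ congrArg _ ?_
  refine setIntegral_congr_fun backwardHeatBall.measurableSet fun p hp ↦ ?_
  simp only [laplacian_eq_sum_fderiv b (backwardHeatBall.contDiffAt_slice hQ hp)]

/-- Local monotonicity formula (Theorem 8 of the paper, after
Ecker–Knopf–Ni–Topping) for a fixed Euclidean metric with `v = Ĥ` the backward
heat kernel: with `E_r` the heat ball, `ψ_r = log Ĥ + n log r` and
`I(r) = r^{-n} ∫_{E_r} ‖∇ψ_r‖² Q`, one has
`I(r₂) - I(r₁) = -∫_{r₁}^{r₂} (n/r^{n+1}) ∫_{E_r} ψ_r (∂_t Q - ΔQ) dr`. -/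
theorem stmt13 (n : ℕ) (hn : 1 ≤ n) (x₀ : EuclideanSpace ℝ (Fin n)) (t₀ : ℝ)
    (ht₀ : 0 < t₀)
    (hatH : EuclideanSpace ℝ (Fin n) → ℝ → ℝ)
    (hhatH : ∀ y t, hatH y t
      = (4 * π * (t₀ - t)) ^ (-(n : ℝ) / 2)
          * Real.exp (-‖x₀ - y‖ ^ 2 / (4 * (t₀ - t))))
    (E : ℝ → Set ((EuclideanSpace ℝ (Fin n)) × ℝ))
    (hE : ∀ r, E r
      = {p | 0 < p.2 ∧ p.2 < t₀ ∧ (r : ℝ) ^ (-(n : ℝ)) ≤ hatH p.1 p.2})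
    (Q : EuclideanSpace ℝ (Fin n) → ℝ → ℝ)
    (hQ : ContDiffOn ℝ (⊤ : ℕ∞) (fun p : (EuclideanSpace ℝ (Fin n)) × ℝ => Q p.1 p.2)
      (Set.univ ×ˢ Set.Ioc 0 t₀))
    (I : ℝ → ℝ)
    (hI : ∀ r, I r = r ^ (-(n : ℝ)) * ∫ p in E r,
      ‖gradient (fun z => Real.log (hatH z p.2) + n * Real.log r) p.1‖ ^ 2
        * Q p.1 p.2) :
    ∀ r₁ r₂ : ℝ, 0 < r₁ → r₁ ≤ r₂ → r₂ ^ 2 < 4 * π * t₀ →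
      I r₂ - I r₁
        = -∫ r in r₁..r₂, (n / r ^ (n + 1)) * ∫ p in E r,
            (Real.log (hatH p.1 p.2) + n * Real.log r)
              * (deriv (fun s => Q p.1 s) p.2 - lap (fun z => Q z p.2) p.1) := by
  unfold lap pdv
  simpa only [EuclideanSpace.basisFun_apply] using fun _ _ ↦ stmt13_general hn
    (EuclideanSpace.basisFun (Fin n) ℝ) hhatH hE (mod_cast contDiffOn_infty.1 hQ 2) hI
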